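/- For all integers Δ ≥ 3 and all δ ∈ (0,1), there exists a constant C = C(Δ,δ) such that for every finite simple graph G = (V,E) with n = |V| ≥ 2 vertices and maximum degree at most Δ, every β ∈ [(Δ−2+δ)/(Δ−δ), (Δ−δ)/(Δ−2+δ)], and every λ > 0, the Glauber dynamics for the Ising model on G with inverse temperature β and external field λ — the distribution μ on σ : V → {+,−} with μ(σ) ∝ β^{m(σ)}·λ^{n₊(σ)}, where m(σ) is the number of monochromatic edges of σ and n₊(σ) is the number of vertices assigned spin + — has mixing time T_mix(P_GL, 1/4) ≤ C·n·log n. -/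

import Mathlib

/-!
In `±1` spins the model has coupling `J = log β / 2` and constant field `log λ / 2`. The mixing time
bound comes from approximate tensorization of entropy, `ent μ f ≤ C ∑ v, E[ent_v f]` with `C`
independent of the graph, obtained by switching the coupling off gradually; very strong fields are
treated separately by contraction of oscillations.

*Correlations.* Deleting a vertex `u` replaces its edges by fields `±J` on its neighbours, and
flipping these fields one at a time expresses the log-odds at `u` through the log-odds at its
neighbours in the graph without `u` (`lodds_rec`, `telescoping`). Each neighbour contributes through a
function with Lipschitz constant `|e^{2J} - 1| / (e^{2J} + 1)`, which by the assumption on `β` is at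
most `(1 - δ) / (Δ - 1)`. Hence the log-odds at a vertex is a Lipschitz function of the external field
in the sup distance, with a constant depending only on `Δ, δ` (`lodds_lip`). Differentiating the
magnetisation bounds the absolute row sums of the covariance matrix, uniformly in the field, so every
linear statistic satisfies `Var (∑ x_v σ_v) ≤ (1 + Δ / δ) ∑ x_v²` (`varLe_unif`). No tree of
self-avoiding walks is needed.

*Tensorization.* For small `t`, observe every edge variable `(σ_u + κ σ_v) / 2`, `κ = sign J`, through
a coin of bias `t` times its value. Conditionally on the coins the law is again Ising, with another
external field and with coupling moved towards `0` by an amount of order `t²` (`obs_isW`). By Parseval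
on the cube of coins the relative entropy loss is, to order `t²`, a sum of squared displacements of
edge variables (`obs_loss`), and the variance bound under all exponential tilts turns into a transport
inequality which bounds this sum by `2 Δ (1 + Δ / δ) · ent` (`edge_displacement`). The single-site
entropies only decrease on average under conditioning, so tensorization at the smaller coupling gives
tensorization at `J` with a slightly larger constant (`at_step`). Cutting the path from `0` to `J` into
`N` rounds with `N` large depending on the graph, the `t⁴` errors are absorbed, and the constants
multiply to `exp (32 Δ (1 + Δ / δ) |J|)`; at coupling `0` the measure is a product (`approx_tensor`).

*Mixing.* Tensorization makes the entropy decay at rate `1 / (C n)` per step; the initial entropy is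
at most `log (1 / μ x) = O(n (1 + |log λ|))`, which yields `O(n log n)` for `λ` in any fixed
compact subset of `(0, ∞)` (`tv_le_of_ent`). If `|log λ| ≥ log (2 Δ 3^Δ)`, the conditional law of a spin
is nearly deterministic, each neighbour influences it by at most `1 / (2 Δ)`, and the sum of the
oscillations of a function contracts by `1 - 1 / (2 n)` per step (`tv_le_of_osc`, `pPlus_influence`).
-/

open Finset

noncomputable section

variable {S : Type} [Fintype S] [DecidableEq S]

/-- Total variation distance between two (densities of) distributions on a finite set. -/
def tvDist (p μ : S → ℝ) : ℝ := (1 / 2) * ∑ x, |p x - μ x|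

/-- Mixing time of a Markov chain with transition matrix `P` and stationary
distribution `μ`: the maximum over starting states `x` in the support of `μ` of the first
time `t` at which the distribution `P^t(x,·)` is within total variation distance `ε`
of `μ`. -/
def mixingTime (μ : S → ℝ) (P : Matrix S S ℝ) (ε : ℝ) : ℕ :=
  (@Finset.filter S (fun x => 0 < μ x) (Classical.decPred _) Finset.univ).sup
    fun x => sInf {t : ℕ | tvDist (fun y => (P ^ t) x y) μ ≤ ε}

variable {V : Type} [Fintype V] [DecidableEq V]

/-- Glauber dynamics transition matrix for a distribution `μ` on `V → q`. -/
def glauberMatrix {q : Type} [Fintype q] [DecidableEq q] (μ : (V → q) → ℝ) :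
    Matrix (V → q) (V → q) ℝ :=
  Matrix.of fun σ σ' =>
    (Fintype.card V : ℝ)⁻¹ *
      ∑ v : V, if ∀ u, u ≠ v → σ' u = σ u then
        μ σ' / ∑ j : q, μ (Function.update σ v j) else 0

/-- Number of monochromatic edges of `σ` (each unordered edge is counted twice as an
ordered pair, whence the division by `2`).  Spins are `Bool`, with `true` playing the
role of `+`. -/
def monoEdges (G : SimpleGraph V) [DecidableRel G.Adj] (σ : V → Bool) : ℕ :=
  (Finset.univ.filter fun p : V × V => G.Adj p.1 p.2 ∧ σ p.1 = σ p.2).card / 2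

/-- Number of vertices receiving spin `+` (`true`). -/
def numPlus (σ : V → Bool) : ℕ := (Finset.univ.filter fun v => σ v = true).card

/-- Weight of a configuration in the Ising model: `β^{m(σ)}·λ^{n₊(σ)}`. -/
def isingWeight (G : SimpleGraph V) [DecidableRel G.Adj] (β lam : ℝ) (σ : V → Bool) : ℝ :=
  β ^ monoEdges G σ * lam ^ numPlus σ

/-- Gibbs distribution of the Ising model on `G` with inverse temperature `β` and
external field `λ`. -/
def isingGibbs (G : SimpleGraph V) [DecidableRel G.Adj] (β lam : ℝ) (σ : V → Bool) : ℝ :=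
  isingWeight G β lam σ / ∑ σ' : V → Bool, isingWeight G β lam σ'

end

namespace IsingMix

/-! ### Entropy of a function against a finite weight -/

/-- Unnormalised entropy `∑ w f log f - (∑ w f) log (∑ w f / ∑ w)` of `f` with respect to the
(not necessarily normalised) weight `w`; it is homogeneous of degree one in `w`. -/
noncomputable def ent {Ω : Type*} [Fintype Ω] (w f : Ω → ℝ) : ℝ :=
  ∑ x, w x * f x * Real.log (f x)
    - (∑ x, w x * f x) * Real.log ((∑ x, w x * f x) / ∑ x, w x)

/-- The variance of `X` under the probability measure proportional to `w` is at most `K`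
(denominators cleared). -/
def VarLe {Ω : Type*} [Fintype Ω] (w X : Ω → ℝ) (K : ℝ) : Prop :=
  (∑ x, w x * X x ^ 2) * (∑ x, w x) - (∑ x, w x * X x) ^ 2 ≤ K * (∑ x, w x) ^ 2

section General

variable {Ω : Type*} [Fintype Ω]

lemma sum_pos' [Nonempty Ω] {w : Ω → ℝ} (hw : ∀ x, 0 < w x) : 0 < ∑ x, w x :=
  Finset.sum_pos (fun x _ => hw x) Finset.univ_nonempty

lemma ent_smul (c : ℝ) (hc : 0 < c) (w f : Ω → ℝ) :
    ent (fun x => c * w x) f = c * ent w f := by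
  unfold ent
  have h1 : ∑ x, c * w x * f x * Real.log (f x) = c * ∑ x, w x * f x * Real.log (f x) := by
    rw [Finset.mul_sum]; exact Finset.sum_congr rfl fun x _ => by ring
  have h2 : ∑ x, c * w x * f x = c * ∑ x, w x * f x := by
    rw [Finset.mul_sum]; exact Finset.sum_congr rfl fun x _ => by ring
  rw [h1, h2, ← Finset.mul_sum, mul_div_mul_left _ _ hc.ne']
  ring

lemma varLe_one [Nonempty Ω] {w X : Ω → ℝ} (hw : ∀ x, 0 < w x) (hX : ∀ x, |X x| ≤ 1) : VarLe w X 1 := by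
  unfold VarLe
  have h0 := sum_pos' hw
  have h1 : ∑ x, w x * X x ^ 2 ≤ ∑ x, w x := by
    refine Finset.sum_le_sum fun x _ => ?_
    have : X x ^ 2 ≤ 1 := by rw [sq_le_one_iff_abs_le_one]; exact hX x
    nlinarith [hw x]
  nlinarith [sq_nonneg (∑ x, w x * X x)]

/-- A uniform variance bound along all exponential tilts makes the log-Laplace transform
`K`-smooth. -/
lemma log_mgf_le [Nonempty Ω] {w X : Ω → ℝ} (hw : ∀ x, 0 < w x) {K : ℝ}
    (hK : ∀ t : ℝ, VarLe (fun x => w x * Real.exp (t * X x)) X K) {t : ℝ} (ht : 0 ≤ t) :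
    Real.log (∑ x, w x * Real.exp (t * X x)) ≤
      Real.log (∑ x, w x) + t * ((∑ x, w x * X x) / ∑ x, w x) + K * t ^ 2 / 2 := by
  set Z : ℝ → ℝ := fun t => ∑ x, w x * Real.exp (t * X x) with hZ
  set Z1 : ℝ → ℝ := fun t => ∑ x, w x * Real.exp (t * X x) * X x with hZ1
  set Z2 : ℝ → ℝ := fun t => ∑ x, w x * Real.exp (t * X x) * X x ^ 2 with hZ2
  have hexp : ∀ x s, HasDerivAt (fun t => w x * Real.exp (t * X x))
      (w x * Real.exp (s * X x) * X x) s := by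
    intro x s
    have := (((hasDerivAt_id s).mul_const (X x)).exp).const_mul (w x)
    refine this.congr_deriv ?_
    simp; ring
  have hZpos : ∀ s, 0 < Z s := fun s => sum_pos' fun x => mul_pos (hw x) (Real.exp_pos _)
  have hdZ : ∀ s, HasDerivAt Z (Z1 s) s := fun s =>
    HasDerivAt.fun_sum fun x _ => hexp x s
  have hdZ1 : ∀ s, HasDerivAt Z1 (Z2 s) s := fun s => by
    refine HasDerivAt.fun_sum fun x _ => ?_
    refine ((hexp x s).mul_const (X x)).congr_deriv ?_
    ring
  set A : ℝ → ℝ := fun s => Z1 s / Z s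
  have hdA : ∀ s, HasDerivAt A ((Z2 s * Z s - Z1 s * Z1 s) / Z s ^ 2) s := fun s =>
    (hdZ1 s).div (hdZ s) (hZpos s).ne'
  have hA : ∀ s, 0 ≤ s → A s ≤ A 0 + K * s := by
    intro s hs
    have hd : ∀ r, HasDerivAt (fun r => A r - K * r)
        ((Z2 r * Z r - Z1 r * Z1 r) / Z r ^ 2 - K) r := fun r => by
      refine ((hdA r).sub ((hasDerivAt_id r).const_mul K)).congr_deriv ?_
      simp
    have hanti : Antitone (fun r => A r - K * r) := by
      refine antitone_of_hasDerivAt_nonpos hd fun r => ?_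
      have := hK r
      unfold VarLe at this
      show (Z2 r * Z r - Z1 r * Z1 r) / Z r ^ 2 - K ≤ 0
      rw [sub_nonpos, div_le_iff₀ (pow_pos (hZpos r) 2)]
      simpa [hZ, hZ1, hZ2, sq] using this
    have := hanti hs
    simp only [mul_zero, sub_zero] at this
    linarith
  have hd : ∀ r, HasDerivAt (fun r => Real.log (Z r) - A 0 * r - K * r ^ 2 / 2)
      (A r - A 0 - K * r) r := fun r => by
    have h1 := (hdZ r).log (hZpos r).ne'
    have h2 := (h1.sub ((hasDerivAt_id r).const_mul (A 0))).sub
      (((hasDerivAt_pow 2 r).const_mul K).div_const 2)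
    refine (h2.congr_deriv ?_)
    simp [A]; ring
  have hanti : AntitoneOn (fun r => Real.log (Z r) - A 0 * r - K * r ^ 2 / 2) (Set.Ici 0) := by
    refine antitoneOn_of_deriv_nonpos (convex_Ici 0)
      (fun r _ => (hd r).continuousAt.continuousWithinAt)
      (fun r _ => (hd r).differentiableAt.differentiableWithinAt) fun r hr => ?_
    rw [(hd r).deriv]
    have := hA r (by simpa using (interior_subset hr : r ∈ Set.Ici (0 : ℝ)))
    linarith
  have := hanti (Set.mem_Ici.2 le_rfl) (Set.mem_Ici.2 ht) ht
  have hA0 : A 0 = (∑ x, w x * X x) / ∑ x, w x := by simp [A, hZ, hZ1]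
  have hZ0 : Z 0 = ∑ x, w x := by simp [hZ]
  simp only [hZ0, hA0] at this
  have e : Z t = ∑ x, w x * Real.exp (t * X x) := rfl
  rw [← e]
  simp only [mul_zero, sub_zero] at this
  norm_num at this
  linarith

/-- Half of the Gibbs variational principle: entropy dominates every exponential test function. -/
lemma gibbs_var [Nonempty Ω] {w f : Ω → ℝ} (hw : ∀ x, 0 < w x) (hf : ∀ x, 0 < f x) (Y : Ω → ℝ) :
    ∑ x, w x * f x * Y x ≤ ent w f +
      (∑ x, w x * f x) * (Real.log (∑ x, w x * Real.exp (Y x)) - Real.log (∑ x, w x)) := by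
  set a := ∑ x, w x * f x with ha
  set b := ∑ x, w x with hb
  set z := ∑ x, w x * Real.exp (Y x) with hz
  have ha0 : 0 < a := sum_pos' fun x => mul_pos (hw x) (hf x)
  have hb0 : 0 < b := sum_pos' hw
  have hz0 : 0 < z := sum_pos' fun x => mul_pos (hw x) (Real.exp_pos _)
  have key : ∀ x, w x * f x * Y x ≤ w x * f x * Real.log (f x)
      + (w x * f x) * (Real.log z - Real.log a) - w x * f x + a / z * (w x * Real.exp (Y x)) := by
    intro x
    have h := Real.log_le_sub_one_of_pos (x := a * Real.exp (Y x) / (z * f x))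
      (by have := hf x; positivity)
    rw [Real.log_div (by positivity) (by have := hf x; positivity),
      Real.log_mul ha0.ne' (Real.exp_pos _).ne', Real.log_exp,
      Real.log_mul hz0.ne' (hf x).ne'] at h
    have h2 := mul_le_mul_of_nonneg_left h (mul_pos (hw x) (hf x)).le
    have h3 : w x * f x * (a * Real.exp (Y x) / (z * f x)) = a / z * (w x * Real.exp (Y x)) := by
      have := (hf x).ne'
      field_simp
    nlinarith
  have h := Finset.sum_le_sum fun x (_ : x ∈ (univ : Finset Ω)) => key x
  rw [Finset.sum_add_distrib, Finset.sum_sub_distrib, Finset.sum_add_distrib, ← Finset.sum_mul,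
    ← Finset.mul_sum, ← ha, ← hz, div_mul_cancel₀ _ hz0.ne'] at h
  unfold ent
  rw [← ha, ← hb, Real.log_div ha0.ne' hb0.ne']
  linarith

/-- Transport-type inequality: changing the measure to the density `f` moves the mean of `X`
by an amount controlled by the entropy of `f`, when the variance of `X` is bounded along all
exponential tilts. It is the variational principle with test function `t X`, optimised over `t`. -/
lemma transport [Nonempty Ω] {w X f : Ω → ℝ} (hw : ∀ x, 0 < w x) (hf : ∀ x, 0 < f x) {K : ℝ} (hK0 : 0 < K)
    (hK : ∀ t : ℝ, VarLe (fun x => w x * Real.exp (t * X x)) X K) :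
    (∑ x, w x * f x * X x - (∑ x, w x * f x) / (∑ x, w x) * ∑ x, w x * X x) ^ 2 ≤
      2 * K * (∑ x, w x * f x) * ent w f := by
  have ha0 : 0 < ∑ x, w x * f x := sum_pos' fun x => mul_pos (hw x) (hf x)
  have hb0 : 0 < ∑ x, w x := sum_pos' hw
  -- The case of a nonnegative displacement; the other sign follows by negating `X`.
  have main : ∀ X : Ω → ℝ, (∀ t : ℝ, VarLe (fun x => w x * Real.exp (t * X x)) X K) →
      0 ≤ (∑ x, w x * f x * X x - (∑ x, w x * f x) / (∑ x, w x) * ∑ x, w x * X x) →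
      (∑ x, w x * f x * X x - (∑ x, w x * f x) / (∑ x, w x) * ∑ x, w x * X x) ^ 2 ≤
      2 * K * (∑ x, w x * f x) * ent w f := by
    intro X hK hD
    set a := ∑ x, w x * f x
    set b := ∑ x, w x
    set D := ∑ x, w x * f x * X x - a / b * ∑ x, w x * X x with hDdef
    set t := D / (a * K) with ht
    have ht0 : 0 ≤ t := by positivity
    have h1 := gibbs_var hw hf (fun x => t * X x)
    have h2 := log_mgf_le hw hK ht0
    have h3 : ∑ x, w x * f x * (t * X x) = t * ∑ x, w x * f x * X x := by
      rw [Finset.mul_sum]; exact Finset.sum_congr rfl fun x _ => by ring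
    rw [h3] at h1
    have h4 : t * D ≤ ent w f + a * (K * t ^ 2 / 2) := by
      have h5 := mul_le_mul_of_nonneg_left h2 ha0.le
      have : t * D = t * ∑ x, w x * f x * X x - a * (t * ((∑ x, w x * X x) / b)) := by
        rw [hDdef]; ring
      rw [this]
      nlinarith
    have h6 : t * D = D ^ 2 / (a * K) := by rw [ht]; ring
    have h7 : a * (K * t ^ 2 / 2) = D ^ 2 / (a * K) / 2 := by
      rw [ht]; field_simp
    rw [h6, h7] at h4
    have h8 : D ^ 2 / (a * K) ≤ 2 * ent w f := by linarith
    rw [div_le_iff₀ (by positivity)] at h8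
    nlinarith
  rcases le_total 0 (∑ x, w x * f x * X x - (∑ x, w x * f x) / (∑ x, w x) * ∑ x, w x * X x)
    with h | h
  · exact main X hK h
  · have h1 : ∑ x, w x * f x * (-X x) = -∑ x, w x * f x * X x := by
      simp
    have h2 : ∑ x, w x * (-X x) = -∑ x, w x * X x := by simp
    have := main (fun x => - X x) (fun t => ?_) (by rw [h1, h2]; linarith)
    · rw [h1, h2] at this
      nlinarith
    · have := hK (-t)
      unfold VarLe at this ⊢
      simpa using this

/-- The transport inequality for a bounded function, valid for every positive weight. -/
lemma transport_bdd [Nonempty Ω] {w X f : Ω → ℝ} (hw : ∀ x, 0 < w x) (hf : ∀ x, 0 < f x)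
    (hX : ∀ x, |X x| ≤ 1) :
    (∑ x, w x * f x * X x - (∑ x, w x * f x) / (∑ x, w x) * ∑ x, w x * X x) ^ 2 ≤
      2 * (∑ x, w x * f x) * ent w f := by
  have := transport (K := 1) hw hf one_pos
    (fun t => varLe_one (fun x => mul_pos (hw x) (Real.exp_pos _)) hX)
  simpa using this

lemma ent_nonneg [Nonempty Ω] {w f : Ω → ℝ} (hw : ∀ x, 0 < w x) (hf : ∀ x, 0 < f x) : 0 ≤ ent w f := by
  have := gibbs_var hw hf (fun _ => 0)
  simpa using this

/-- Chain rule: for a mixture `w = ∑ τ, W τ`, the entropy lost by conditioning on `τ` is the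
entropy of the conditional means. -/
lemma ent_mixture {T : Type*} [Fintype T] {w f : Ω → ℝ} {W : T → Ω → ℝ}
    (hW : ∀ x, w x = ∑ τ, W τ x) :
    ent w f - ∑ τ, ent (W τ) f =
      ∑ τ, (∑ x, W τ x * f x) * (Real.log ((∑ x, W τ x * f x) / ∑ x, W τ x)
        - Real.log ((∑ x, w x * f x) / ∑ x, w x)) := by
  have h1 : ∑ x, w x * f x * Real.log (f x) = ∑ τ, ∑ x, W τ x * f x * Real.log (f x) := by
    rw [Finset.sum_comm]
    exact Finset.sum_congr rfl fun x _ => by rw [hW, Finset.sum_mul, Finset.sum_mul]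
  have h2 : ∑ τ, ∑ x, W τ x * f x = ∑ x, w x * f x := by
    rw [Finset.sum_comm]
    exact Finset.sum_congr rfl fun x _ => by rw [hW, Finset.sum_mul]
  unfold ent
  simp_rw [mul_sub, Finset.sum_sub_distrib, ← Finset.sum_mul]
  rw [h1, h2]
  ring

/-- Conditioning on the component of a mixture does not increase the expected entropy. -/
lemma ent_superadd [Nonempty Ω] {T : Type*} [Fintype T] {w f : Ω → ℝ} {W : T → Ω → ℝ}
    (hf : ∀ x, 0 < f x) (hWp : ∀ τ x, 0 < W τ x) (hw : ∀ x, 0 < w x)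
    (hW : ∀ x, w x = ∑ τ, W τ x) :
    ∑ τ, ent (W τ) f ≤ ent w f := by
  have h := ent_mixture (f := f) hW
  rw [← sub_nonneg, h]
  set a := ∑ x, w x * f x with ha
  set b := ∑ x, w x with hb
  have ha0 : 0 < a := sum_pos' fun x => mul_pos (hw x) (hf x)
  have hb0 : 0 < b := sum_pos' hw
  have h2 : ∑ τ, ∑ x, W τ x * f x = a := by
    rw [Finset.sum_comm]
    exact Finset.sum_congr rfl fun x _ => by rw [hW, Finset.sum_mul]
  have h3 : ∑ τ, ∑ x, W τ x = b := by
    rw [Finset.sum_comm]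
    exact Finset.sum_congr rfl fun x _ => by rw [hW]
  have key : ∀ τ, (∑ x, W τ x * f x) - a / b * ∑ x, W τ x ≤
      (∑ x, W τ x * f x) * (Real.log ((∑ x, W τ x * f x) / ∑ x, W τ x) - Real.log (a / b)) := by
    intro τ
    have hA : 0 < ∑ x, W τ x * f x := sum_pos' fun x => mul_pos (hWp τ x) (hf x)
    have hB : 0 < ∑ x, W τ x := sum_pos' (hWp τ)
    set A := ∑ x, W τ x * f x
    set B := ∑ x, W τ x
    have h := Real.one_sub_inv_le_log_of_pos (x := (A / B) / (a / b)) (by positivity)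
    rw [Real.log_div (by positivity) (by positivity)] at h
    have h4 := mul_le_mul_of_nonneg_left h hA.le
    refine le_trans (le_of_eq ?_) h4
    field_simp
  refine le_trans (le_of_eq ?_) (Finset.sum_le_sum fun τ _ => key τ)
  rw [Finset.sum_sub_distrib, ← Finset.mul_sum, h2, h3]
  field_simp
  simp

/-- The entropy loss of a mixture is at most the corresponding chi-square quantity. -/
lemma ent_loss_le [Nonempty Ω] {T : Type*} [Fintype T] {w f : Ω → ℝ} {W : T → Ω → ℝ}
    (hf : ∀ x, 0 < f x) (hWp : ∀ τ x, 0 < W τ x) (hw : ∀ x, 0 < w x)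
    (hW : ∀ x, w x = ∑ τ, W τ x) :
    ent w f - ∑ τ, ent (W τ) f ≤ (∑ x, w x) / (∑ x, w x * f x) *
      ∑ τ, (∑ x, W τ x * (f x - (∑ x, w x * f x) / ∑ x, w x)) ^ 2 / ∑ x, W τ x := by
  rw [ent_mixture hW]
  set a := ∑ x, w x * f x with ha
  set b := ∑ x, w x with hb
  have ha0 : 0 < a := sum_pos' fun x => mul_pos (hw x) (hf x)
  have hb0 : 0 < b := sum_pos' hw
  have h2 : ∑ τ, ∑ x, W τ x * f x = a := by
    rw [Finset.sum_comm]
    exact Finset.sum_congr rfl fun x _ => by rw [hW, Finset.sum_mul]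
  have h3 : ∑ τ, ∑ x, W τ x = b := by
    rw [Finset.sum_comm]
    exact Finset.sum_congr rfl fun x _ => by rw [hW]
  have key : ∀ τ,
      (∑ x, W τ x * f x) * (Real.log ((∑ x, W τ x * f x) / ∑ x, W τ x) - Real.log (a / b)) ≤
      b / a * ((∑ x, W τ x * (f x - a / b)) ^ 2 / ∑ x, W τ x) + ((∑ x, W τ x * f x)
        - a / b * ∑ x, W τ x) := by
    intro τ
    have e : ∑ x, W τ x * (f x - a / b) = (∑ x, W τ x * f x) - a / b * ∑ x, W τ x := by
      rw [Finset.mul_sum, ← Finset.sum_sub_distrib]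
      exact Finset.sum_congr rfl fun x _ => by ring
    rw [e]
    have hA : 0 < ∑ x, W τ x * f x := sum_pos' fun x => mul_pos (hWp τ x) (hf x)
    have hB : 0 < ∑ x, W τ x := sum_pos' (hWp τ)
    set A := ∑ x, W τ x * f x
    set B := ∑ x, W τ x
    have h := Real.log_le_sub_one_of_pos (x := (A / B) / (a / b)) (by positivity)
    rw [Real.log_div (by positivity) (by positivity)] at h
    have h4 := mul_le_mul_of_nonneg_left h hA.le
    refine le_trans h4 (le_of_eq ?_)
    field_simp
    ring
  refine (Finset.sum_le_sum fun τ _ => key τ).trans (le_of_eq ?_)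
  rw [Finset.sum_add_distrib, ← Finset.mul_sum, Finset.sum_sub_distrib, ← Finset.mul_sum, h2, h3]
  field_simp
  simp

end General

/-! ### Entropy loss under noisy observation of bounded functions -/

/-- The real spin `±1` of a Boolean. -/
noncomputable def sp (b : Bool) : ℝ := if b then 1 else -1

@[simp] lemma sp_true : sp true = 1 := by simp [sp]
@[simp] lemma sp_false : sp false = -1 := by simp [sp]
lemma sp_sq (b : Bool) : sp b ^ 2 = 1 := by cases b <;> simp
lemma abs_sp (b : Bool) : |sp b| = 1 := by cases b <;> simp
@[simp] lemma sp_not (b : Bool) : sp (!b) = -sp b := by cases b <;> simp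

section Cube

variable {Ω I : Type*}

/-- The weight `w` reweighted by the likelihood of observing the signs `τ`, where sign `τ p` is a
coin with bias `t * X p`, the coins being conditionally independent. -/
noncomputable def obs [Fintype I] (w : Ω → ℝ) (X : I → Ω → ℝ) (t : ℝ) (τ : I → Bool) (x : Ω) : ℝ :=
  w x * ∏ p, ((1 + sp (τ p) * (t * X p x)) / 2)

lemma sum_obs [Fintype I] [DecidableEq I] (w : Ω → ℝ) (X : I → Ω → ℝ) (t : ℝ) (x : Ω) :
    w x = ∑ τ, obs w X t τ x := by
  unfold obs
  rw [← Finset.mul_sum, ← Fintype.prod_sum (fun p b => (1 + sp b * (t * X p x)) / 2)]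
  have : ∀ p, ∑ b : Bool, (1 + sp b * (t * X p x)) / 2 = 1 := fun p => by
    simp; ring
  rw [Finset.prod_congr rfl fun p _ => this p]
  simp

lemma obs_factor {X : I → Ω → ℝ} (hX : ∀ p x, |X p x| ≤ 1) {t : ℝ} (ht0 : 0 ≤ t)
    (τ : I → Bool) (p : I) (x : Ω) : 1 - t ≤ 1 + sp (τ p) * (t * X p x) := by
  have h1 : |sp (τ p) * (t * X p x)| ≤ t := by
    rw [abs_mul, abs_sp, one_mul, abs_mul, abs_of_nonneg ht0]
    exact mul_le_of_le_one_right ht0 (hX p x)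
  linarith [neg_abs_le (sp (τ p) * (t * X p x))]

lemma obs_ge [Fintype I] {w : Ω → ℝ} (hw : ∀ x, 0 < w x) {X : I → Ω → ℝ} (hX : ∀ p x, |X p x| ≤ 1)
    {t : ℝ} (ht0 : 0 ≤ t) (ht1 : t < 1) (τ : I → Bool) (x : Ω) :
    w x * ((1 - t) / 2) ^ Fintype.card I ≤ obs w X t τ x := by
  unfold obs
  refine mul_le_mul_of_nonneg_left ?_ (hw x).le
  rw [← Finset.card_univ, ← Finset.prod_const]
  refine Finset.prod_le_prod (fun _ _ => by linarith) fun p _ => ?_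
  linarith [obs_factor hX ht0 τ p x]

lemma obs_pos [Fintype I] {w : Ω → ℝ} (hw : ∀ x, 0 < w x) {X : I → Ω → ℝ} (hX : ∀ p x, |X p x| ≤ 1)
    {t : ℝ} (ht0 : 0 ≤ t) (ht1 : t < 1) (τ : I → Bool) (x : Ω) : 0 < obs w X t τ x :=
  lt_of_lt_of_le (mul_pos (hw x) (pow_pos (by linarith) _)) (obs_ge hw hX ht0 ht1 τ x)

/-- Parseval identity on the cube of observations. -/
lemma obs_parseval [Fintype Ω] [Fintype I] [DecidableEq I] (w : Ω → ℝ) (X : I → Ω → ℝ) (t : ℝ) (g : Ω → ℝ) :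
    ∑ τ, (∑ x, obs w X t τ x * g x) ^ 2 = (1 / 2) ^ Fintype.card I *
      ∑ S : Finset I, t ^ (2 * S.card) * (∑ x, w x * g x * ∏ p ∈ S, X p x) ^ 2 := by
  have h1 : ∀ τ, (∑ x, obs w X t τ x * g x) ^ 2 = ∑ x, ∑ y, (w x * g x * (w y * g y)) *
      ∏ p, ((1 + sp (τ p) * (t * X p x)) / 2 * ((1 + sp (τ p) * (t * X p y)) / 2)) := by
    intro τ
    rw [sq, Finset.sum_mul_sum]
    refine Finset.sum_congr rfl fun x _ => Finset.sum_congr rfl fun y _ => ?_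
    unfold obs
    rw [Finset.prod_mul_distrib]
    ring
  have h2 : ∀ x y, ∑ τ : I → Bool,
      ∏ p, ((1 + sp (τ p) * (t * X p x)) / 2 * ((1 + sp (τ p) * (t * X p y)) / 2)) =
      (1 / 2) ^ Fintype.card I * ∑ S : Finset I, t ^ (2 * S.card) *
        ((∏ p ∈ S, X p x) * ∏ p ∈ S, X p y) := by
    intro x y
    rw [← Fintype.prod_sum
      (fun p b => (1 + sp b * (t * X p x)) / 2 * ((1 + sp b * (t * X p y)) / 2))]
    have : ∀ p, ∑ b : Bool, (1 + sp b * (t * X p x)) / 2 * ((1 + sp b * (t * X p y)) / 2) =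
        1 / 2 * (1 + t ^ 2 * (X p x * X p y)) := fun p => by
      simp; ring
    simp_rw [this]
    rw [Finset.prod_mul_distrib, Finset.prod_const, Finset.card_univ, Finset.prod_one_add,
      Finset.powerset_univ]
    congr 1
    refine Finset.sum_congr rfl fun S _ => ?_
    rw [Finset.prod_mul_distrib, Finset.prod_const, Finset.prod_mul_distrib, ← pow_mul]
  simp_rw [h1]
  rw [Finset.sum_comm]
  have h3 : ∀ x, ∑ τ : I → Bool, ∑ y, (w x * g x * (w y * g y)) *
      ∏ p, ((1 + sp (τ p) * (t * X p x)) / 2 * ((1 + sp (τ p) * (t * X p y)) / 2)) =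
      ∑ y, (w x * g x * (w y * g y)) * ((1 / 2) ^ Fintype.card I * ∑ S : Finset I,
        t ^ (2 * S.card) * ((∏ p ∈ S, X p x) * ∏ p ∈ S, X p y)) := by
    intro x
    rw [Finset.sum_comm]
    refine Finset.sum_congr rfl fun y _ => ?_
    rw [← Finset.mul_sum, h2]
  simp_rw [h3]
  have h4 : ∀ S : Finset I, (∑ x, w x * g x * ∏ p ∈ S, X p x) ^ 2 =
      ∑ x, ∑ y, (w x * g x * (w y * g y)) * ((∏ p ∈ S, X p x) * ∏ p ∈ S, X p y) := by
    intro S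
    rw [sq, Finset.sum_mul_sum]
    exact Finset.sum_congr rfl fun x _ => Finset.sum_congr rfl fun y _ => by ring
  simp_rw [h4, Finset.mul_sum]
  rw [Finset.sum_comm (s := (univ : Finset (Finset I)))]
  refine Finset.sum_congr rfl fun x _ => ?_
  rw [Finset.sum_comm]
  exact Finset.sum_congr rfl fun S _ => Finset.sum_congr rfl fun y _ => by ring

/-- Entropy lost in one round of noisy observation. The linear statistics `X p` contribute the
leading term `R * t ^ 2`; all higher order correlations are `O(t ^ 4)`, with a constant that may
depend on the number of observations. -/
lemma obs_loss [Fintype Ω] [Nonempty Ω] [Fintype I] [DecidableEq I] {w f : Ω → ℝ}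
    (hw : ∀ x, 0 < w x) (hf : ∀ x, 0 < f x) {X : I → Ω → ℝ} (hX : ∀ p x, |X p x| ≤ 1)
    {t : ℝ} (ht0 : 0 ≤ t) (ht1 : t < 1) {R : ℝ}
    (hR : ∑ p, (∑ x, w x * (f x - (∑ x, w x * f x) / ∑ x, w x) * X p x) ^ 2 ≤
      R * (∑ x, w x * f x) * ent w f) :
    ent w f - ∑ τ, ent (obs w X t τ) f ≤
      ((1 - t) ^ Fintype.card I)⁻¹ * (R * t ^ 2 + 2 ^ (Fintype.card I + 1) * t ^ 4) * ent w f := by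
  refine (ent_loss_le hf (obs_pos hw hX ht0 ht1) hw (sum_obs w X t)).trans ?_
  set a := ∑ x, w x * f x with ha
  set b := ∑ x, w x with hb
  have ha0 : 0 < a := sum_pos' fun x => mul_pos (hw x) (hf x)
  have hb0 : 0 < b := sum_pos' hw
  have hE := ent_nonneg hw hf
  set E := ent w f
  set n := Fintype.card I
  set D : Finset I → ℝ := fun S => ∑ x, w x * (f x - a / b) * ∏ p ∈ S, X p x with hD
  have hD2 : ∀ S, D S ^ 2 ≤ 2 * a * E := by
    intro S
    have h := transport_bdd (X := fun x => ∏ p ∈ S, X p x) hw hf (fun x => by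
      rw [Finset.abs_prod]
      exact Finset.prod_le_one (fun _ _ => abs_nonneg _) fun p _ => hX p x)
    have e : D S = ∑ x, w x * f x * ∏ p ∈ S, X p x - a / b * ∑ x, w x * ∏ p ∈ S, X p x := by
      rw [hD, Finset.mul_sum, ← Finset.sum_sub_distrib]
      exact Finset.sum_congr rfl fun x _ => by ring
    rw [e]; exact h
  have hD0 : D ∅ = 0 := by
    simp only [hD, Finset.prod_empty, mul_one, mul_sub, Finset.sum_sub_distrib,
      ← Finset.sum_mul, ← ha, ← hb]
    field_simp
    simp
  have hS : ∑ S : Finset I, t ^ (2 * S.card) * D S ^ 2 ≤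
      (R * t ^ 2 + 2 ^ (n + 1) * t ^ 4) * a * E := by
    have h1 : ∀ S : Finset I, t ^ (2 * S.card) * D S ^ 2 ≤
        (if S.card = 1 then t ^ 2 * D S ^ 2 else 0) + t ^ 4 * (2 * a * E) := by
      intro S
      have hnn : 0 ≤ t ^ 4 * (2 * a * E) := by positivity
      rcases Nat.lt_or_ge S.card 2 with h | h
      · interval_cases hc : S.card
        · rw [Finset.card_eq_zero.1 hc, hD0]; simpa using hnn
        · simpa using hnn
      · rw [if_neg (by omega), zero_add]
        have : t ^ (2 * S.card) ≤ t ^ 4 := pow_le_pow_of_le_one ht0 ht1.le (by omega)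
        exact mul_le_mul this (hD2 S) (sq_nonneg _) (by positivity)
    refine (Finset.sum_le_sum fun S _ => h1 S).trans ?_
    rw [Finset.sum_add_distrib, ← Finset.sum_filter, Finset.sum_const, Finset.card_univ,
      Fintype.card_finset]
    -- The sets with one element reproduce the displacements of the individual `X p`.
    have h2 : (univ.filter fun S : Finset I => S.card = 1) =
        univ.map ⟨fun p => ({p} : Finset I), Finset.singleton_injective⟩ := by
      ext S
      simp only [mem_filter, mem_univ, true_and, mem_map, Finset.card_eq_one]
      exact ⟨fun ⟨a, h⟩ => ⟨a, h.symm⟩, fun ⟨a, h⟩ => ⟨a, h.symm⟩⟩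
    rw [h2, Finset.sum_map, ← Finset.mul_sum]
    have h3 : ∑ p, D {p} ^ 2 ≤ R * a * E := by simpa [hD] using hR
    have h4 := mul_le_mul_of_nonneg_left h3 (sq_nonneg t)
    simp only [Function.Embedding.coeFn_mk, nsmul_eq_mul, Nat.cast_pow, Nat.cast_ofNat]
    refine (add_le_add_left h4 _).trans (le_of_eq ?_)
    ring
  have hB : ∀ τ, b * ((1 - t) / 2) ^ n ≤ ∑ x, obs w X t τ x := by
    intro τ
    rw [hb, Finset.sum_mul]
    exact Finset.sum_le_sum fun x _ => obs_ge hw hX ht0 ht1 τ x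
  have h1t : 0 < 1 - t := by linarith
  have h5 : ∑ τ, (∑ x, obs w X t τ x * (f x - a / b)) ^ 2 / ∑ x, obs w X t τ x ≤
      ∑ τ, (∑ x, obs w X t τ x * (f x - a / b)) ^ 2 / (b * ((1 - t) / 2) ^ n) :=
    Finset.sum_le_sum fun τ _ => div_le_div_of_nonneg_left (sq_nonneg _) (by positivity) (hB τ)
  rw [← Finset.sum_div, obs_parseval] at h5
  have h6 := mul_le_mul_of_nonneg_left h5 (div_pos hb0 ha0).le
  refine h6.trans ?_
  have h7 : b / a * ((1 / 2) ^ n * (∑ S : Finset I, t ^ (2 * S.card) * D S ^ 2) /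
      (b * ((1 - t) / 2) ^ n)) =
      ((1 - t) ^ n)⁻¹ / a * ∑ S : Finset I, t ^ (2 * S.card) * D S ^ 2 := by
    rw [div_pow, div_pow, one_pow]
    field_simp
  refine (le_of_eq h7).trans ?_
  refine (mul_le_mul_of_nonneg_left hS (by positivity)).trans (le_of_eq ?_)
  field_simp

end Cube

/-! ### Single-site entropies and product measures -/

section Site

variable {V : Type} [DecidableEq V]

/-- Conditional expectation of `f` given all spins except the one at `v`, under the probability
measure proportional to `w`. -/
noncomputable def avg (w : (V → Bool) → ℝ) (v : V) (f : (V → Bool) → ℝ) (σ : V → Bool) : ℝ :=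
  (∑ b, w (Function.update σ v b) * f (Function.update σ v b)) / ∑ b, w (Function.update σ v b)

/-- The sum over sites of the expected conditional entropies of `f` given all other spins. The
factor `1 / 2` compensates for each pair of configurations differing at `v` being listed twice. -/
noncomputable def siteEnt [Fintype V] (w f : (V → Bool) → ℝ) : ℝ :=
  ∑ v, (1 / 2) * ∑ σ : V → Bool,
    ent (fun b => w (Function.update σ v b)) (fun b => f (Function.update σ v b))

lemma sum_update [Fintype V] (v : V) (F : (V → Bool) → ℝ) :
    ∑ σ : V → Bool, ∑ b, F (Function.update σ v b) = 2 * ∑ σ, F σ := by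
  have h1 : ∀ σ : V → Bool, ∑ b, F (Function.update σ v b) =
      F σ + F (Function.update σ v (!σ v)) := by
    intro σ
    have e : Function.update σ v (σ v) = σ := Function.update_eq_self v σ
    rw [Fintype.sum_bool]
    cases h : σ v <;> rw [h] at e <;> rw [e] <;> simp [add_comm]
  simp_rw [h1]
  rw [Finset.sum_add_distrib, two_mul]
  congr 1
  refine Finset.sum_nbij' (fun σ => Function.update σ v (!σ v))
    (fun σ => Function.update σ v (!σ v)) ?_ ?_ ?_ ?_ ?_ <;> simp

lemma siteEnt_smul [Fintype V] (c : ℝ) (hc : 0 < c) (w f : (V → Bool) → ℝ) :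
    siteEnt (fun x => c * w x) f = c * siteEnt w f := by
  unfold siteEnt
  simp_rw [ent_smul c hc, ← Finset.mul_sum, mul_left_comm _ c]

lemma siteEnt_superadd [Fintype V] {T : Type*} [Fintype T] {w f : (V → Bool) → ℝ}
    {W : T → (V → Bool) → ℝ} (hf : ∀ x, 0 < f x) (hWp : ∀ τ x, 0 < W τ x) (hw : ∀ x, 0 < w x)
    (hW : ∀ x, w x = ∑ τ, W τ x) :
    ∑ τ, siteEnt (W τ) f ≤ siteEnt w f := by
  unfold siteEnt
  rw [Finset.sum_comm]
  refine Finset.sum_le_sum fun v _ => ?_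
  rw [← Finset.mul_sum, Finset.sum_comm]
  refine mul_le_mul_of_nonneg_left (Finset.sum_le_sum fun σ _ => ?_) (by norm_num)
  exact ent_superadd (W := fun τ b => W τ (Function.update σ v b)) (fun _ => hf _)
    (fun _ _ => hWp _ _) (fun _ => hw _) (fun _ => hW _)

lemma avg_update (w : (V → Bool) → ℝ) (v : V) (f : (V → Bool) → ℝ) (σ : V → Bool) (b : Bool) :
    avg w v f (Function.update σ v b) = avg w v f σ := by
  simp [avg]

lemma avg_pos {w f : (V → Bool) → ℝ} (hw : ∀ x, 0 < w x) (hf : ∀ x, 0 < f x) (v : V)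
    (σ : V → Bool) : 0 < avg w v f σ :=
  div_pos (sum_pos' fun _ => mul_pos (hw _) (hf _)) (sum_pos' fun _ => hw _)

/-- `avg` is a conditional expectation: it can be integrated against functions not depending on
the spin at `v`. -/
lemma sum_mul_avg [Fintype V] {w : (V → Bool) → ℝ} (hw : ∀ x, 0 < w x) (v : V)
    (f g : (V → Bool) → ℝ) (hg : ∀ σ b, g (Function.update σ v b) = g σ) :
    ∑ σ, w σ * avg w v f σ * g σ = ∑ σ, w σ * f σ * g σ := by
  have h1 := sum_update v (fun σ => w σ * avg w v f σ * g σ)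
  have h2 := sum_update v (fun σ => w σ * f σ * g σ)
  have : ∀ σ, ∑ b, w (Function.update σ v b) * avg w v f (Function.update σ v b) *
      g (Function.update σ v b) = ∑ b, w (Function.update σ v b) * f (Function.update σ v b) *
      g (Function.update σ v b) := by
    intro σ
    simp_rw [avg_update, hg, ← Finset.sum_mul]
    congr 1
    unfold avg
    rw [mul_div_cancel₀]
    exact (sum_pos' fun _ => hw _).ne'
  simp_rw [this] at h1
  linarith

lemma sum_avg [Fintype V] {w : (V → Bool) → ℝ} (hw : ∀ x, 0 < w x) (v : V)
    (f : (V → Bool) → ℝ) : ∑ σ, w σ * avg w v f σ = ∑ σ, w σ * f σ := by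
  simpa using sum_mul_avg hw v f (fun _ => 1) (fun _ _ => rfl)

/-- The expected conditional entropy at a site is the entropy drop under averaging that site. -/
lemma site_eq [Fintype V] {w : (V → Bool) → ℝ} (hw : ∀ x, 0 < w x) (v : V)
    (f : (V → Bool) → ℝ) :
    (1 / 2) * ∑ σ : V → Bool,
      ent (fun b => w (Function.update σ v b)) (fun b => f (Function.update σ v b)) =
    ent w f - ent w (avg w v f) := by
  have h1 := sum_update v (fun σ => w σ * f σ * Real.log (f σ))
  have h2 := sum_update v (fun σ => w σ * f σ * Real.log (avg w v f σ))
  have h3 := sum_mul_avg hw v f (fun σ => Real.log (avg w v f σ))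
    (fun σ b => by rw [avg_update])
  have h4 : ∀ σ : V → Bool,
      ent (fun b => w (Function.update σ v b)) (fun b => f (Function.update σ v b)) =
      ∑ b, w (Function.update σ v b) * f (Function.update σ v b) *
        Real.log (f (Function.update σ v b)) -
      ∑ b, w (Function.update σ v b) * f (Function.update σ v b) *
        Real.log (avg w v f (Function.update σ v b)) := by
    intro σ
    simp_rw [avg_update, ← Finset.sum_mul]
    rfl
  simp_rw [h4, Finset.sum_sub_distrib, h1, h2]
  unfold ent
  rw [sum_avg hw, h3]
  ring

/-- Product structure of a weight: changing the spin at `u` rescales the conditional weight of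
the spin at `v` by a constant. -/
def IsProd (w : (V → Bool) → ℝ) : Prop :=
  ∀ u v, u ≠ v → ∀ σ b, ∃ c : ℝ, 0 < c ∧ ∀ b',
    w (Function.update (Function.update σ u b) v b') = c * w (Function.update σ v b')

lemma avg_indep {w : (V → Bool) → ℝ} (hp : IsProd w) {u v : V} (huv : u ≠ v)
    {g : (V → Bool) → ℝ} (hg : ∀ σ b, g (Function.update σ u b) = g σ) (σ : V → Bool) (b : Bool) :
    avg w v g (Function.update σ u b) = avg w v g σ := by
  obtain ⟨c, hc, h⟩ := hp u v huv σ b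
  unfold avg
  have h2 : ∀ b', g (Function.update (Function.update σ u b) v b') =
      g (Function.update σ v b') := fun b' => by
    rw [Function.update_comm huv, hg]
  simp_rw [h, h2, mul_assoc, ← Finset.mul_sum]
  rw [mul_div_mul_left _ _ hc.ne']

/-- Tensorisation of entropy for product measures: averaging out the sites one at a time
telescopes the entropy, and each increment is controlled by the variational principle on a
single site. -/
lemma ent_le_siteEnt_of_isProd [Fintype V] {w f : (V → Bool) → ℝ} (hw : ∀ x, 0 < w x)
    (hf : ∀ x, 0 < f x) (hp : IsProd w) : ent w f ≤ siteEnt w f := by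
  have key : ∀ U : Finset V, ∃ g : (V → Bool) → ℝ, (∀ σ, 0 < g σ) ∧
      (∀ u ∈ U, ∀ σ b, g (Function.update σ u b) = g σ) ∧ (∑ σ, w σ * g σ = ∑ σ, w σ * f σ) ∧
      ∑ σ, w σ * f σ * (Real.log (f σ) - Real.log (g σ)) ≤
        ∑ v ∈ U, (1 / 2) * ∑ σ : V → Bool,
          ent (fun b => w (Function.update σ v b)) (fun b => f (Function.update σ v b)) := by
    intro U
    induction U using Finset.induction_on with
    | empty => exact ⟨f, hf, by simp, rfl, by simp⟩
    | insert v U hv ih =>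
      obtain ⟨g, hg0, hgU, hgs, hgl⟩ := ih
      refine ⟨avg w v g, avg_pos hw hg0 v, ?_, (sum_avg hw v g).trans hgs, ?_⟩
      · intro u hu σ b
        rcases eq_or_ne u v with rfl | huv
        · exact avg_update w u g σ b
        · exact avg_indep hp huv (hgU u ((Finset.mem_insert.1 hu).resolve_left huv)) σ b
      · rw [Finset.sum_insert hv]
        have h1 : ∑ σ, w σ * f σ * (Real.log (g σ) - Real.log (avg w v g σ)) ≤
            (1 / 2) * ∑ σ : V → Bool,
              ent (fun b => w (Function.update σ v b)) (fun b => f (Function.update σ v b)) := by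
          have h2 := sum_update v
            (fun σ => w σ * f σ * (Real.log (g σ) - Real.log (avg w v g σ)))
          rw [show ∑ σ, w σ * f σ * (Real.log (g σ) - Real.log (avg w v g σ)) = (1 / 2) *
            (2 * ∑ σ, w σ * f σ * (Real.log (g σ) - Real.log (avg w v g σ))) by ring, ← h2]
          refine mul_le_mul_of_nonneg_left (Finset.sum_le_sum fun σ _ => ?_) (by norm_num)
          refine (gibbs_var (w := fun b => w (Function.update σ v b)) (fun _ => hw _)
            (fun _ => hf _) _).trans ?_
          have h3 : ∑ b, w (Function.update σ v b) * Real.exp (Real.log (g (Function.update σ v b))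
              - Real.log (avg w v g (Function.update σ v b))) =
              ∑ b, w (Function.update σ v b) := by
            have hav := avg_pos hw hg0 v σ
            simp_rw [avg_update, Real.exp_sub, Real.exp_log (hg0 _), Real.exp_log hav,
              ← mul_div_assoc, ← Finset.sum_div]
            rw [div_eq_iff hav.ne']
            unfold avg
            rw [mul_div_cancel₀]
            exact (sum_pos' fun _ => hw _).ne'
          rw [h3]
          simp
        have h4 : ∑ σ, w σ * f σ * (Real.log (f σ) - Real.log (avg w v g σ)) =
            ∑ σ, w σ * f σ * (Real.log (g σ) - Real.log (avg w v g σ)) +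
            ∑ σ, w σ * f σ * (Real.log (f σ) - Real.log (g σ)) := by
          rw [← Finset.sum_add_distrib]
          exact Finset.sum_congr rfl fun σ _ => by ring
        rw [h4]
        exact add_le_add h1 hgl
  obtain ⟨g, hg0, hgU, hgs, hgl⟩ := key univ
  have hconst : ∀ U : Finset V, ∀ σ ρ : V → Bool, (∀ v, v ∉ U → σ v = ρ v) → g σ = g ρ := by
    intro U
    induction U using Finset.induction_on with
    | empty => intro σ ρ h; rw [funext fun v => h v (by simp)]
    | insert v U hv ih =>
      intro σ ρ h
      rw [← hgU v (mem_univ _) σ (ρ v)]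
      refine ih _ _ fun u hu => ?_
      rcases eq_or_ne u v with rfl | huv
      · simp
      · simp only [ne_eq, huv, not_false_eq_true, Function.update_of_ne]
        exact h u (by simp [huv, hu])
  obtain ⟨σ₀⟩ : Nonempty (V → Bool) := inferInstance
  have hc : ∀ σ, g σ = g σ₀ := fun σ => hconst univ _ _ (by simp)
  have hb : 0 < ∑ σ, w σ := sum_pos' hw
  have hm : g σ₀ = (∑ σ, w σ * f σ) / ∑ σ, w σ := by
    rw [eq_div_iff hb.ne', ← hgs, Finset.mul_sum]
    exact Finset.sum_congr rfl fun σ _ => by rw [hc σ]; ring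
  refine le_trans (le_of_eq ?_) hgl
  unfold ent
  simp_rw [hc, hm, mul_sub, Finset.sum_sub_distrib, ← Finset.sum_mul]

end Site

/-! ### Decay of correlations for the Ising model below the tree threshold -/

section Ising

set_option linter.unusedSectionVars false

variable {V : Type} [Fintype V] [DecidableEq V]

/-- Sum of the products of spins over ordered pairs of adjacent vertices in `U`. -/
noncomputable def inter (G : SimpleGraph V) [DecidableRel G.Adj] (U : Finset V)
    (σ : V → Bool) : ℝ :=
  ∑ u ∈ U, ∑ v ∈ U, if G.Adj u v then sp (σ u) * sp (σ v) else 0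

/-- Linear statistic of the spins with coefficients `h`. -/
noncomputable def lin (h : V → ℝ) (σ : V → Bool) : ℝ := ∑ v, h v * sp (σ v)

/-- Gibbs weight of the Ising model in `±1` spins with coupling `J` on the edges inside `U` and an
arbitrary external field `h`. Vertices outside `U` are isolated. -/
noncomputable def isW (G : SimpleGraph V) [DecidableRel G.Adj] (U : Finset V) (J : ℝ) (h : V → ℝ)
    (σ : V → Bool) : ℝ :=
  Real.exp (J / 2 * inter G U σ + lin h σ)

/-- The constant field `x` on the set `N`. -/
noncomputable def ind (N : Finset V) (x : ℝ) : V → ℝ := fun w => if w ∈ N then x else 0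

/-- Twice the partition function restricted to spin `b` at `u`. -/
noncomputable def Zb (G : SimpleGraph V) [DecidableRel G.Adj] (U : Finset V) (J : ℝ) (u : V)
    (b : Bool) (h : V → ℝ) : ℝ := ∑ σ : V → Bool, isW G U J h (Function.update σ u b)

/-- Log-odds of spin `+` at `u`. -/
noncomputable def lodds (G : SimpleGraph V) [DecidableRel G.Adj] (U : Finset V) (J : ℝ) (u : V)
    (h : V → ℝ) : ℝ := Real.log (Zb G U J u true h) - Real.log (Zb G U J u false h)

/-- Log-partition function, up to the additive constant `log 2`. -/
noncomputable def logZ (G : SimpleGraph V) [DecidableRel G.Adj] (U : Finset V) (J : ℝ)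
    (h : V → ℝ) : ℝ := Real.log (2 * ∑ σ, isW G U J h σ)

lemma lin_add (h k : V → ℝ) (σ : V → Bool) : lin (h + k) σ = lin h σ + lin k σ := by
  simp [lin, add_mul, Finset.sum_add_distrib]

lemma lin_smul (t : ℝ) (k : V → ℝ) (σ : V → Bool) : lin (t • k) σ = t * lin k σ := by
  simp [lin, Finset.mul_sum, mul_assoc]

lemma lin_ind (N : Finset V) (x : ℝ) (σ : V → Bool) :
    lin (ind N x) σ = x * ∑ v ∈ N, sp (σ v) := by
  simp [lin, ind, Finset.mul_sum, ite_mul, Finset.sum_ite_mem]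

lemma lin_update (h : V → ℝ) (σ : V → Bool) (v : V) (b : Bool) :
    lin h (Function.update σ v b) = lin h σ + h v * (sp b - sp (σ v)) := by
  have : lin h (Function.update σ v b) - lin h σ = h v * (sp b - sp (σ v)) := by
    unfold lin
    rw [← Finset.sum_sub_distrib, Finset.sum_eq_single v]
    · simp; ring
    · intro u _ huv
      simp [huv]
    · simp
  linarith

variable (G : SimpleGraph V) [DecidableRel G.Adj]

lemma isW_pos (U : Finset V) (J : ℝ) (h : V → ℝ) (σ : V → Bool) : 0 < isW G U J h σ :=
  Real.exp_pos _

lemma isW_add (U : Finset V) (J : ℝ) (h k : V → ℝ) (σ : V → Bool) :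
    isW G U J (h + k) σ = isW G U J h σ * Real.exp (lin k σ) := by
  unfold isW
  rw [lin_add, ← add_assoc, Real.exp_add]

lemma Zb_pos (U : Finset V) (J : ℝ) (u : V) (b : Bool) (h : V → ℝ) : 0 < Zb G U J u b h :=
  sum_pos' fun _ => isW_pos G U J h _

lemma two_Z (U : Finset V) (J : ℝ) (u : V) (h : V → ℝ) :
    2 * ∑ σ, isW G U J h σ = Zb G U J u true h + Zb G U J u false h := by
  rw [← sum_update u]
  simp [Zb, Finset.sum_add_distrib]

lemma Zb_add_ind (U : Finset V) (J : ℝ) (u : V) (b : Bool) (h : V → ℝ) (x : ℝ) :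
    Zb G U J u b (h + ind {u} x) = Real.exp (x * sp b) * Zb G U J u b h := by
  unfold Zb
  rw [Finset.mul_sum]
  refine Finset.sum_congr rfl fun σ _ => ?_
  rw [isW_add, lin_ind]
  simp [mul_comm]

/-- Effect on the log-odds at `u` of adding a neighbour with log-odds `x` through an edge of
multiplicative strength `b`. -/
noncomputable def gfun (b x : ℝ) : ℝ := Real.log (b * Real.exp x + 1) - Real.log (Real.exp x + b)

/-- The edge contracts log-odds by `|b - 1| / (b + 1)`, the maximal slope, attained at `x = 0`. -/
lemma gfun_lip {b : ℝ} (hb : 0 < b) (x y : ℝ) :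
    |gfun b x - gfun b y| ≤ |b - 1| / (b + 1) * |x - y| := by
  have hd : ∀ z, HasDerivAt (gfun b) (b * Real.exp z / (b * Real.exp z + 1)
      - Real.exp z / (Real.exp z + b)) z := by
    intro z
    have hz := Real.exp_pos z
    have h1 := ((Real.hasDerivAt_exp z).const_mul b).add_const 1
    have h2 := (Real.hasDerivAt_exp z).add_const b
    exact (h1.log (by positivity)).sub (h2.log (by positivity))
  have := Convex.norm_image_sub_le_of_norm_hasDerivWithin_le (f := gfun b) (s := Set.univ)
    (C := |b - 1| / (b + 1)) (fun z _ => (hd z).hasDerivWithinAt) (fun z _ => ?_)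
    convex_univ (Set.mem_univ y) (Set.mem_univ x)
  · simpa using this
  · have hz := Real.exp_pos z
    have e : b * Real.exp z / (b * Real.exp z + 1) - Real.exp z / (Real.exp z + b) =
        (b - 1) * ((b + 1) * Real.exp z / ((b * Real.exp z + 1) * (Real.exp z + b))) := by
      field_simp
      ring
    rw [e, Real.norm_eq_abs, abs_mul, div_eq_mul_inv |b - 1|]
    refine mul_le_mul_of_nonneg_left ?_ (abs_nonneg _)
    rw [abs_of_nonneg (by positivity), ← one_div, div_le_div_iff₀ (by positivity) (by positivity)]
    nlinarith [mul_nonneg hb.le (sq_nonneg (Real.exp z - 1))]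

/-- Imposing the field `±J` at `v` in place of an edge from `v` to a removed neighbour: the two
signs differ by the message that `v` sends. -/
lemma logZ_diff (U : Finset V) (J : ℝ) (v : V) (h : V → ℝ) :
    logZ G U J (h + ind {v} J) - logZ G U J (h + ind {v} (-J)) =
      gfun (Real.exp (2 * J)) (lodds G U J v h) := by
  have ht := Zb_pos G U J v true h
  have hf := Zb_pos G U J v false h
  unfold logZ gfun lodds
  rw [two_Z G U J v, two_Z G U J v, Zb_add_ind, Zb_add_ind, Zb_add_ind, Zb_add_ind,
    Real.exp_sub, Real.exp_log ht, Real.exp_log hf]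
  set A := Zb G U J v true h
  set B := Zb G U J v false h
  have e2 : Real.exp (2 * J) = Real.exp J * Real.exp J := by rw [← Real.exp_add]; ring_nf
  have h1 : Real.exp (2 * J) * (A / B) + 1 =
      (Real.exp (J * sp true) * A + Real.exp (J * sp false) * B) * (Real.exp J / B) := by
    simp [e2, Real.exp_neg]
    have := Real.exp_pos J
    field_simp
  have h2 : A / B + Real.exp (2 * J) =
      (Real.exp (-J * sp true) * A + Real.exp (-J * sp false) * B) * (Real.exp J / B) := by
    simp [e2, Real.exp_neg]
    have := Real.exp_pos J
    field_simp
  rw [h1, h2, Real.log_mul (by positivity) (by positivity),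
    Real.log_mul (by positivity) (by positivity)]
  ring

/-- The map `F` on fields is `L`-Lipschitz for the sup distance. -/
def FLip (F : (V → ℝ) → ℝ) (L : ℝ) : Prop :=
  ∀ h h' : V → ℝ, ∀ ε : ℝ, (∀ w, |h w - h' w| ≤ ε) → |F h - F h'| ≤ L * ε

lemma ind_insert {N : Finset V} {v : V} (hv : v ∉ N) (x : ℝ) :
    ind (insert v N) x = ind {v} x + ind N x := by
  funext w
  by_cases h : w = v
  · subst h; simp [ind, hv]
  · simp [ind, h]

/-- Flipping the fields on `N` from `-J` to `J` one vertex at a time, each flip contributes one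
message; the fields already flipped only change the external field, uniformly over which the
hypothesis holds. -/
lemma telescoping (U : Finset V) (J : ℝ) {L : ℝ} (N : Finset V)
    (hN : ∀ v ∈ N, FLip (lodds G U J v) L) :
    FLip (fun h => logZ G U J (h + ind N J) - logZ G U J (h + ind N (-J)))
      (|Real.exp (2 * J) - 1| / (Real.exp (2 * J) + 1) * N.card * L) := by
  induction N using Finset.induction_on with
  | empty =>
    intro h h' ε hε
    have : ∀ x : ℝ, ind (∅ : Finset V) x = 0 := fun x => by funext w; simp [ind]
    simp [this]
  | insert v N hv ih =>
    intro h h' ε hε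
    set θ := |Real.exp (2 * J) - 1| / (Real.exp (2 * J) + 1)
    have ihN := ih fun u hu => hN u (Finset.mem_insert_of_mem hu)
    have split : ∀ h : V → ℝ, logZ G U J (h + ind (insert v N) J)
        - logZ G U J (h + ind (insert v N) (-J)) =
        (logZ G U J (h + ind {v} J + ind N J) - logZ G U J (h + ind {v} J + ind N (-J)))
        + gfun (Real.exp (2 * J)) (lodds G U J v (h + ind N (-J))) := by
      intro h
      rw [← logZ_diff, ind_insert hv, ind_insert hv, ← add_assoc, ← add_assoc,
        add_right_comm h (ind {v} (-J)), add_right_comm h (ind {v} J) (ind N (-J))]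
      ring
    show |(_ - _) - (_ - _)| ≤ _
    rw [split h, split h']
    have h1 := ihN (h + ind {v} J) (h' + ind {v} J) ε (fun w => by simpa using hε w)
    have h2 := gfun_lip (Real.exp_pos (2 * J)) (lodds G U J v (h + ind N (-J)))
      (lodds G U J v (h' + ind N (-J)))
    have h3 := hN v (Finset.mem_insert_self v N) (h + ind N (-J)) (h' + ind N (-J)) ε
      (fun w => by simpa using hε w)
    have hθ : 0 ≤ θ := by positivity
    have h4 := mul_le_mul_of_nonneg_left h3 hθ
    rw [Finset.card_insert_of_notMem hv]
    push_cast
    rw [add_sub_add_comm]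
    refine (abs_add_le _ _).trans ?_
    simp only [] at h1
    nlinarith

lemma inter_split {U : Finset V} {u : V} (hu : u ∈ U) (σ : V → Bool) :
    inter G U σ = inter G (U.erase u) σ +
      2 * sp (σ u) * ∑ v ∈ (U.erase u).filter (G.Adj u), sp (σ v) := by
  unfold inter
  conv_lhs => rw [← Finset.insert_erase hu]
  have hne := Finset.notMem_erase u U
  rw [Finset.sum_insert hne, Finset.sum_insert hne]
  simp_rw [Finset.sum_insert hne]
  rw [Finset.sum_add_distrib, Finset.sum_filter, Finset.mul_sum]
  simp only [SimpleGraph.irrefl, if_false, zero_add]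
  have h1 : ∀ v, (if G.Adj u v then sp (σ u) * sp (σ v) else 0) =
      sp (σ u) * (if G.Adj u v then sp (σ v) else 0) := fun v => by split_ifs <;> simp
  have h2 : ∀ v, (if G.Adj v u then sp (σ v) * sp (σ u) else 0) =
      sp (σ u) * (if G.Adj u v then sp (σ v) else 0) := fun v => by
    simp only [G.adj_comm v u]; split_ifs <;> ring
  simp_rw [h1, h2, ← Finset.mul_sum]
  ring

lemma inter_update {U : Finset V} {u : V} (hu : u ∉ U) (σ : V → Bool) (b : Bool) :
    inter G U (Function.update σ u b) = inter G U σ := by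
  unfold inter
  refine Finset.sum_congr rfl fun v hv => Finset.sum_congr rfl fun w hw => ?_
  have h1 : v ≠ u := fun h => hu (h ▸ hv)
  have h2 : w ≠ u := fun h => hu (h ▸ hw)
  simp [h1, h2]

/-- Recursion for the log-odds: deleting `u` leaves fields `±J` on its neighbours. -/
lemma lodds_rec {U : Finset V} {u : V} (hu : u ∈ U) (J : ℝ) (h : V → ℝ) :
    lodds G U J u h = 2 * h u +
      (logZ G (U.erase u) J (h + ind ((U.erase u).filter (G.Adj u)) J) -
       logZ G (U.erase u) J (h + ind ((U.erase u).filter (G.Adj u)) (-J))) := by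
  set N := (U.erase u).filter (G.Adj u) with hN
  have huN : u ∉ N := by simp [hN]
  have h1 : ∀ b, Zb G U J u b h = Zb G (U.erase u) J u b (h + ind N (J * sp b)) := by
    intro b
    refine Finset.sum_congr rfl fun σ _ => ?_
    rw [isW_add, isW, isW, inter_split G hu, lin_ind, ← Real.exp_add]
    congr 1
    simp only [Function.update_self]
    rw [← hN]
    ring
  have h2 : ∀ k : V → ℝ, Zb G (U.erase u) J u true k =
      Real.exp (2 * k u) * Zb G (U.erase u) J u false k := by
    intro k
    unfold Zb
    rw [Finset.mul_sum]
    refine Finset.sum_congr rfl fun σ _ => ?_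
    unfold isW
    rw [inter_update G (Finset.notMem_erase u U), inter_update G (Finset.notMem_erase u U),
      lin_update, lin_update, ← Real.exp_add]
    congr 1
    simp
    ring
  have hk : ∀ x, (h + ind N x) u = h u := fun x => by simp [ind, huN]
  have h3 : ∀ x, logZ G (U.erase u) J (h + ind N x) = Real.log (Real.exp (2 * h u) + 1) +
      Real.log (Zb G (U.erase u) J u false (h + ind N x)) := by
    intro x
    have := Zb_pos G (U.erase u) J u false (h + ind N x)
    unfold logZ
    rw [two_Z G _ J u, h2, hk, ← Real.log_mul (by positivity) this.ne']
    congr 1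
    ring
  unfold lodds
  rw [h1, h1, h2, hk, h3, h3, Real.log_mul (Real.exp_pos _).ne' (Zb_pos _ _ _ _ _ _).ne',
    Real.log_exp]
  simp
  ring

lemma lodds_step {U : Finset V} {u : V} (hu : u ∈ U) (J : ℝ) {L : ℝ}
    (hN : ∀ v ∈ (U.erase u).filter (G.Adj u), FLip (lodds G (U.erase u) J v) L) :
    FLip (lodds G U J u) (2 + |Real.exp (2 * J) - 1| / (Real.exp (2 * J) + 1) *
      ((U.erase u).filter (G.Adj u)).card * L) := by
  intro h h' ε hε
  have h1 := telescoping G (U.erase u) J _ hN h h' ε hε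
  rw [lodds_rec G hu, lodds_rec G hu, add_sub_add_comm]
  refine (abs_add_le _ _).trans ?_
  rw [add_mul]
  refine add_le_add ?_ h1
  rw [← mul_sub, abs_mul, abs_two]
  linarith [hε u]

/-- Away from the root each vertex has at most `Δ - 1` remaining neighbours, and the Lipschitz
constant of the log-odds is a fixed point of the tree recursion. -/
lemma lodds_lip_nonroot {Δ : ℕ} {J L : ℝ} (hL0 : 0 ≤ L)
    (hL : 2 + |Real.exp (2 * J) - 1| / (Real.exp (2 * J) + 1) * ((Δ : ℝ) - 1) * L ≤ L)
    (n : ℕ) : ∀ U : Finset V, U.card = n → (∀ v ∈ U, (U.filter (G.Adj v)).card ≤ Δ) →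
      ∀ u ∈ U, (U.filter (G.Adj u)).card + 1 ≤ Δ → FLip (lodds G U J u) L := by
  induction n with
  | zero =>
    intro U hU _ u hu
    rw [Finset.card_eq_zero.1 hU] at hu
    simp at hu
  | succ n ih =>
    intro U hU hdeg u hu hdu
    have hsub : ∀ v, ((U.erase u).filter (G.Adj v)) ⊆ U.filter (G.Adj v) := fun v =>
      Finset.filter_subset_filter _ (Finset.erase_subset u U)
    have hstep := lodds_step G hu J (L := L) fun v hv => by
      rw [Finset.mem_filter] at hv
      refine ih (U.erase u) (by rw [Finset.card_erase_of_mem hu, hU]; rfl) (fun w hw =>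
        (Finset.card_le_card (hsub w)).trans (hdeg w (Finset.mem_of_mem_erase hw))) v hv.1 ?_
      have h1 : (U.erase u).filter (G.Adj v) ⊂ U.filter (G.Adj v) := by
        refine Finset.ssubset_iff_subset_ne.2 ⟨hsub v, fun h => ?_⟩
        have : u ∈ U.filter (G.Adj v) := Finset.mem_filter.2 ⟨hu, hv.2.symm⟩
        rw [← h] at this
        simp at this
      have := Finset.card_lt_card h1
      have := hdeg v (Finset.mem_of_mem_erase hv.1)
      omega
    intro h h' ε hε
    refine (hstep h h' ε hε).trans (mul_le_mul_of_nonneg_right (le_trans ?_ hL)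
      ((abs_nonneg _).trans (hε u)))
    have h1 : (((U.erase u).filter (G.Adj u)).card : ℝ) ≤ (Δ : ℝ) - 1 := by
      have := Finset.card_le_card (hsub u)
      have h2 : ((U.erase u).filter (G.Adj u)).card + 1 ≤ Δ := by omega
      have h3 : ((((U.erase u).filter (G.Adj u)).card + 1 : ℕ) : ℝ) ≤ Δ := by exact_mod_cast h2
      push_cast at h3
      linarith
    gcongr

/-- The root has up to `Δ` neighbours, so its Lipschitz constant is obtained from that of the other
vertices by one more step of the recursion. -/
lemma lodds_lip {Δ : ℕ} {J L : ℝ} (hL0 : 0 ≤ L)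
    (hL : 2 + |Real.exp (2 * J) - 1| / (Real.exp (2 * J) + 1) * ((Δ : ℝ) - 1) * L ≤ L)
    (hdeg : ∀ v, G.degree v ≤ Δ) (u : V) : FLip (lodds G univ J u) (2 + Δ * L) := by
  have hd : ∀ v, (univ.filter (G.Adj v)).card ≤ Δ := fun v => by
    rw [← SimpleGraph.neighborFinset_eq_filter]; exact hdeg v
  have hsub : ∀ v, ((univ.erase u).filter (G.Adj v)) ⊆ univ.filter (G.Adj v) := fun v =>
      Finset.filter_subset_filter _ (Finset.erase_subset u univ)
  have hstep := lodds_step G (mem_univ u) J (L := L) fun v hv => by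
      rw [Finset.mem_filter] at hv
      refine lodds_lip_nonroot G hL0 hL _ (univ.erase u) rfl (fun w hw =>
        (Finset.card_le_card (hsub w)).trans (hd w)) v hv.1 ?_
      have h1 : (univ.erase u).filter (G.Adj v) ⊂ univ.filter (G.Adj v) := by
        refine Finset.ssubset_iff_subset_ne.2 ⟨hsub v, fun h => ?_⟩
        have : u ∈ univ.filter (G.Adj v) := Finset.mem_filter.2 ⟨mem_univ u, hv.2.symm⟩
        rw [← h] at this
        simp at this
      have := Finset.card_lt_card h1
      have := hd v
      omega
  intro h h' ε hε
  refine (hstep h h' ε hε).trans (mul_le_mul_of_nonneg_right ?_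
      ((abs_nonneg _).trans (hε u)))
  have h1 : (((univ.erase u).filter (G.Adj u)).card : ℝ) ≤ (Δ : ℝ) := by
    exact_mod_cast (Finset.card_le_card (hsub u)).trans (hd u)
  have h2 : |Real.exp (2 * J) - 1| / (Real.exp (2 * J) + 1) ≤ 1 := by
    have := Real.exp_pos (2 * J)
    rw [div_le_one (by positivity), abs_le]
    constructor <;> linarith
  have h3 : 0 ≤ |Real.exp (2 * J) - 1| / (Real.exp (2 * J) + 1) := by positivity
  have h4 : |Real.exp (2 * J) - 1| / (Real.exp (2 * J) + 1) *
      (((univ.erase u).filter (G.Adj u)).card : ℝ) ≤ 1 * Δ :=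
    mul_le_mul h2 h1 (by positivity) one_pos.le
  nlinarith

end Ising

/-! ### Covariance bounds uniform in the external field -/

section Cov

set_option linter.unusedSectionVars false

variable {V : Type} [Fintype V] [DecidableEq V] (G : SimpleGraph V) [DecidableRel G.Adj]

/-- The magnetisation at `u` is `tanh` of half the log-odds. -/
lemma mag_lip {J L : ℝ} {u : V} (hL : FLip (lodds G univ J u) L) :
    FLip (fun h => (∑ σ, isW G univ J h σ * sp (σ u)) / ∑ σ, isW G univ J h σ) (L / 2) := by
  have hd : ∀ z : ℝ, HasDerivAt (fun z => (Real.exp z - 1) / (Real.exp z + 1))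
      (2 * Real.exp z / (Real.exp z + 1) ^ 2) z := by
    intro z
    have hz := Real.exp_pos z
    refine (((Real.hasDerivAt_exp z).sub_const 1).div ((Real.hasDerivAt_exp z).add_const 1)
      (by positivity)).congr_deriv ?_
    ring
  have hlip : ∀ x y : ℝ, |(Real.exp x - 1) / (Real.exp x + 1)
      - (Real.exp y - 1) / (Real.exp y + 1)| ≤ 1 / 2 * |x - y| := by
    intro x y
    have := Convex.norm_image_sub_le_of_norm_hasDerivWithin_le
      (f := fun z => (Real.exp z - 1) / (Real.exp z + 1)) (s := Set.univ)
      (C := 1 / 2) (fun z _ => (hd z).hasDerivWithinAt) (fun z _ => ?_)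
      convex_univ (Set.mem_univ y) (Set.mem_univ x)
    · simpa using this
    · have hz := Real.exp_pos z
      rw [Real.norm_eq_abs, abs_of_nonneg (by positivity),
        div_le_div_iff₀ (by positivity) (by positivity)]
      nlinarith [sq_nonneg (Real.exp z - 1)]
  have hm : ∀ h, (∑ σ, isW G univ J h σ * sp (σ u)) / ∑ σ, isW G univ J h σ =
      (Real.exp (lodds G univ J u h) - 1) / (Real.exp (lodds G univ J u h) + 1) := by
    intro h
    have h1 := sum_update u (fun σ => isW G univ J h σ * sp (σ u))
    have h2 : ∑ σ : V → Bool, ∑ b, isW G univ J h (Function.update σ u b) *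
        sp (Function.update σ u b u) = Zb G univ J u true h - Zb G univ J u false h := by
      simp only [Function.update_self, Fintype.sum_bool, sp_true, sp_false, mul_one, mul_neg,
        ← sub_eq_add_neg, Finset.sum_sub_distrib, Zb]
    have h3 := two_Z G univ J u h
    have ht := Zb_pos G univ J u true h
    have hf := Zb_pos G univ J u false h
    rw [h2] at h1
    rw [← mul_div_mul_left _ _ (two_ne_zero' ℝ), ← h1, h3]
    unfold lodds
    rw [Real.exp_sub, Real.exp_log ht, Real.exp_log hf]
    field_simp
  intro h h' ε hε
  have := hL h h' ε hε
  show |_ / _ - _ / _| ≤ _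
  rw [hm, hm]
  refine (hlip _ _).trans ?_
  linarith

/-- Row sums of the absolute covariance matrix: differentiate the magnetisation in the direction
given by the signs of the covariances. -/
lemma cov_row {J L : ℝ} (hL0 : 0 ≤ L) {u : V}
    (hL : FLip (fun h => (∑ σ, isW G univ J h σ * sp (σ u)) / ∑ σ, isW G univ J h σ) L)
    (h : V → ℝ) :
    ∑ v, |(∑ σ, isW G univ J h σ * (sp (σ u) * sp (σ v))) * (∑ σ, isW G univ J h σ) -
      (∑ σ, isW G univ J h σ * sp (σ u)) * (∑ σ, isW G univ J h σ * sp (σ v))| ≤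
      L * (∑ σ, isW G univ J h σ) ^ 2 := by
  set C : V → ℝ := fun v => (∑ σ, isW G univ J h σ * (sp (σ u) * sp (σ v))) *
    (∑ σ, isW G univ J h σ) -
      (∑ σ, isW G univ J h σ * sp (σ u)) * (∑ σ, isW G univ J h σ * sp (σ v)) with hC
  set k : V → ℝ := fun v => if 0 ≤ C v then 1 else -1 with hk
  have hk1 : ∀ v, |k v| = 1 := fun v => by simp only [hk]; split_ifs <;> simp
  have hkC : ∀ v, |C v| = k v * C v := fun v => by
    simp only [hk]
    split_ifs with h0
    · rw [abs_of_nonneg h0, one_mul]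
    · rw [abs_of_neg (not_le.1 h0)]; ring
  have hZ : 0 < ∑ σ, isW G univ J h σ := sum_pos' (isW_pos G univ J h)
  have hdW : ∀ σ, HasDerivAt (fun t : ℝ => isW G univ J (h + t • k) σ)
      (isW G univ J h σ * lin k σ) 0 := by
    intro σ
    have h1 := (((hasDerivAt_id (0 : ℝ)).mul_const (lin k σ)).exp).const_mul (isW G univ J h σ)
    have h2 : (fun t : ℝ => isW G univ J (h + t • k) σ) =
        fun t => isW G univ J h σ * Real.exp (id t * lin k σ) := by
      funext t; rw [isW_add, lin_smul]; rfl
    rw [h2]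
    refine h1.congr_deriv ?_
    simp
  have hdN := HasDerivAt.fun_sum (u := univ) fun σ _ => (hdW σ).mul_const (sp (σ u))
  have hdD := HasDerivAt.fun_sum (u := univ) fun σ _ => hdW σ
  have hd := hdN.div hdD (by simpa using hZ.ne')
  have hb := norm_deriv_le_of_lip' (x₀ := (0 : ℝ)) (f := fun t : ℝ =>
      (∑ σ, isW G univ J (h + t • k) σ * sp (σ u)) / ∑ σ, isW G univ J (h + t • k) σ) hL0
    (Filter.Eventually.of_forall fun t => by
      have := hL (h + t • k) (h + (0 : ℝ) • k) |t| (fun w => by simp [abs_mul, hk1])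
      simpa using this)
  have hb' := hd.deriv
  have e : ∀ {a b : ℝ}, a = b → ‖a‖ ≤ L → ‖b‖ ≤ L := fun h => by rw [h]; exact id
  have hb2 := e hb' hb
  have h0 : h + (0 : ℝ) • k = h := by rw [zero_smul, add_zero]
  rw [h0] at hb2
  rw [Real.norm_eq_abs, abs_div, abs_of_pos (pow_pos hZ 2), div_le_iff₀ (pow_pos hZ 2)] at hb2
  refine le_trans (le_of_eq ?_) ((le_abs_self _).trans hb2)
  change ∑ v, |C v| = _
  simp_rw [hkC]
  have s1 : ∑ σ, isW G univ J h σ * lin k σ * sp (σ u) =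
      ∑ v, k v * ∑ σ, isW G univ J h σ * (sp (σ u) * sp (σ v)) := by
    simp only [lin, Finset.mul_sum, Finset.sum_mul]
    rw [Finset.sum_comm]
    exact Finset.sum_congr rfl fun v _ => Finset.sum_congr rfl fun σ _ => by ring
  have s2 : ∑ σ, isW G univ J h σ * lin k σ =
      ∑ v, k v * ∑ σ, isW G univ J h σ * sp (σ v) := by
    simp only [lin, Finset.mul_sum]
    rw [Finset.sum_comm]
    exact Finset.sum_congr rfl fun v _ => Finset.sum_congr rfl fun σ _ => by ring
  rw [s1, s2, Finset.sum_mul, Finset.mul_sum, ← Finset.sum_sub_distrib]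
  exact Finset.sum_congr rfl fun v _ => by simp only [hC]; ring

/-- The covariance matrix has operator norm at most its maximal absolute row sum. -/
lemma varLe_lin {J L : ℝ} (hL0 : 0 ≤ L)
    (hL : ∀ u, FLip (fun h => (∑ σ, isW G univ J h σ * sp (σ u)) / ∑ σ, isW G univ J h σ) L)
    (h x : V → ℝ) : VarLe (isW G univ J h) (lin x) (L * ∑ v, x v ^ 2) := by
  unfold VarLe
  set W := isW G univ J h with hW
  set Z := ∑ σ, W σ with hZ
  set C : V → V → ℝ := fun u v => (∑ σ, W σ * (sp (σ u) * sp (σ v))) * Z -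
    (∑ σ, W σ * sp (σ u)) * (∑ σ, W σ * sp (σ v)) with hC
  have hrow : ∀ u, ∑ v, |C u v| ≤ L * Z ^ 2 := fun u => cov_row G hL0 (hL u) h
  have hsymm : ∀ u v, C u v = C v u := fun u v => by
    simp only [hC]
    rw [show (∑ σ, W σ * (sp (σ u) * sp (σ v))) = ∑ σ, W σ * (sp (σ v) * sp (σ u)) from
      Finset.sum_congr rfl fun σ _ => by ring]
    ring
  have s1 : ∑ σ, W σ * lin x σ ^ 2 = ∑ u, ∑ v, x u * x v * ∑ σ, W σ * (sp (σ u) * sp (σ v)) := by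
    have : ∀ σ, W σ * lin x σ ^ 2 = ∑ u, ∑ v, x u * x v * (W σ * (sp (σ u) * sp (σ v))) := by
      intro σ
      unfold lin
      rw [sq, Finset.sum_mul_sum, Finset.mul_sum]
      refine Finset.sum_congr rfl fun u _ => ?_
      rw [Finset.mul_sum]
      exact Finset.sum_congr rfl fun v _ => by ring
    simp_rw [this, Finset.mul_sum]
    rw [Finset.sum_comm]
    refine Finset.sum_congr rfl fun u _ => ?_
    rw [Finset.sum_comm]
  have s2 : ∑ σ, W σ * lin x σ = ∑ v, x v * ∑ σ, W σ * sp (σ v) := by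
    simp only [lin, Finset.mul_sum]
    rw [Finset.sum_comm]
    exact Finset.sum_congr rfl fun v _ => Finset.sum_congr rfl fun σ _ => by ring
  have e : (∑ σ, W σ * lin x σ ^ 2) * Z - (∑ σ, W σ * lin x σ) ^ 2 =
      ∑ u, ∑ v, x u * x v * C u v := by
    clear_value Z
    rw [s1, s2, sq (∑ v, _), Finset.sum_mul_sum, Finset.sum_mul, ← Finset.sum_sub_distrib]
    refine Finset.sum_congr rfl fun u _ => ?_
    rw [Finset.sum_mul, ← Finset.sum_sub_distrib]
    exact Finset.sum_congr rfl fun v _ => by simp only [hC]; ring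
  rw [e]
  have b1 : ∑ u, ∑ v, x u * x v * C u v ≤
      ∑ u, ∑ v, (x u ^ 2 / 2 * |C u v| + x v ^ 2 / 2 * |C v u|) := by
    refine Finset.sum_le_sum fun u _ => Finset.sum_le_sum fun v _ => ?_
    rw [← hsymm u v]
    have h1 : x u * x v * C u v ≤ |x u * x v| * |C u v| := by
      rw [← abs_mul]; exact le_abs_self _
    have h2 : |x u * x v| ≤ x u ^ 2 / 2 + x v ^ 2 / 2 := by
      rw [abs_le]; constructor <;> nlinarith [sq_nonneg (x u - x v), sq_nonneg (x u + x v)]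
    nlinarith [abs_nonneg (C u v)]
  refine b1.trans ?_
  simp_rw [Finset.sum_add_distrib]
  rw [Finset.sum_comm (f := fun u v => x v ^ 2 / 2 * |C v u|)]
  simp_rw [← Finset.mul_sum]
  rw [← Finset.sum_add_distrib, mul_right_comm, Finset.mul_sum]
  refine Finset.sum_le_sum fun u _ => ?_
  have := mul_le_mul_of_nonneg_left (hrow u) (sq_nonneg (x u))
  linarith

/-- In the uniqueness region the log-odds recursion contracts, so the variances of linear statistics
are bounded uniformly in the external field. -/
lemma varLe_unif {Δ : ℕ} {δ J : ℝ} (hδ : 0 < δ)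
    (hJ : |Real.exp (2 * J) - 1| / (Real.exp (2 * J) + 1) * ((Δ : ℝ) - 1) ≤ 1 - δ)
    (hdeg : ∀ v, G.degree v ≤ Δ) (h x : V → ℝ) :
    VarLe (isW G univ J h) (lin x) ((1 + Δ / δ) * ∑ v, x v ^ 2) := by
  have h1 : (2 + Δ * (2 / δ)) / 2 = 1 + Δ / δ := by ring
  rw [← h1]
  refine varLe_lin G (by positivity) (fun u => mag_lip G (lodds_lip G (by positivity) ?_ hdeg u)) h x
  have h2 : |Real.exp (2 * J) - 1| / (Real.exp (2 * J) + 1) * ((Δ : ℝ) - 1) * (2 / δ) ≤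
      (1 - δ) * (2 / δ) := mul_le_mul_of_nonneg_right hJ (by positivity)
  have h3 : (1 - δ) * (2 / δ) = 2 / δ - 2 := by field_simp
  linarith

/-- On the interval of inverse temperatures, written for the coupling `J`, the recursion contracts
with slack `δ`. -/
lemma contraction_of_exp_le {Δ : ℕ} (hΔ : 3 ≤ Δ) {δ J : ℝ} (hδ0 : 0 < δ)
    (hJ : Real.exp (2 * |J|) ≤ ((Δ : ℝ) - δ) / ((Δ : ℝ) - 2 + δ)) :
    |Real.exp (2 * J) - 1| / (Real.exp (2 * J) + 1) * ((Δ : ℝ) - 1) ≤ 1 - δ := by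
  have hΔ' : (3 : ℝ) ≤ Δ := by exact_mod_cast hΔ
  have hd : 0 < (Δ : ℝ) - 2 + δ := by linarith
  rw [le_div_iff₀ hd] at hJ
  have hp := Real.exp_pos (2 * J)
  rw [div_mul_eq_mul_div, div_le_iff₀ (by positivity)]
  rcases le_total 0 J with h0 | h0
  · rw [abs_of_nonneg h0] at hJ
    rw [abs_of_nonneg (by linarith [Real.add_one_le_exp (2 * J)])]
    linarith
  · rw [abs_of_nonpos h0] at hJ
    have h1 : Real.exp (2 * J) ≤ 1 := Real.exp_le_one_iff.2 (by linarith)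
    rw [abs_of_nonpos (by linarith)]
    have h2 : Real.exp (2 * -J) * Real.exp (2 * J) = 1 := by rw [← Real.exp_add]; simp
    nlinarith

end Cov

/-! ### Approximate tensorization of entropy by gradually switching off the coupling -/

section AT

set_option linter.unusedSectionVars false

variable {V : Type} [Fintype V] [DecidableEq V] (G : SimpleGraph V) [DecidableRel G.Adj]

/-- The edge observable `(σ_u + κ σ_v) / 2`, for an ordered pair `(u, v)` of adjacent vertices, and
`0` for other pairs. For `κ = ±1` its square on adjacent pairs is `(1 + κ σ_u σ_v) / 2`. -/
noncomputable def edgeObs (κ : ℝ) (p : V × V) (σ : V → Bool) : ℝ :=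
  if G.Adj p.1 p.2 then (sp (σ p.1) + κ * sp (σ p.2)) / 2 else 0

lemma edgeObs_cases {κ : ℝ} (hκ : κ = 1 ∨ κ = -1) (p : V × V) (σ : V → Bool) :
    edgeObs G κ p σ = 0 ∨ edgeObs G κ p σ = 1 ∨ edgeObs G κ p σ = -1 := by
  unfold edgeObs
  split_ifs
  · rcases hκ with rfl | rfl <;> cases σ p.1 <;> cases σ p.2 <;> norm_num
  · simp

lemma abs_edgeObs_le {κ : ℝ} (hκ : κ = 1 ∨ κ = -1) (p : V × V) (σ : V → Bool) :
    |edgeObs G κ p σ| ≤ 1 := by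
  rcases edgeObs_cases G hκ p σ with h | h | h <;> rw [h] <;> norm_num

lemma sum_edgeObs_sq {κ : ℝ} (hκ : κ = 1 ∨ κ = -1) (σ : V → Bool) :
    ∑ p, edgeObs G κ p σ ^ 2 =
      (∑ p : V × V, if G.Adj p.1 p.2 then (1 / 2 : ℝ) else 0) + κ / 2 * inter G univ σ := by
  unfold inter
  rw [← Fintype.sum_prod_type' (fun u v => if G.Adj u v then sp (σ u) * sp (σ v) else 0),
    Finset.mul_sum, ← Finset.sum_add_distrib]
  refine Finset.sum_congr rfl fun p _ => ?_
  unfold edgeObs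
  split_ifs
  · rcases hκ with rfl | rfl <;> cases σ p.1 <;> cases σ p.2 <;> norm_num
  · simp

lemma lin_sum {I : Type*} [Fintype I] (k : I → V → ℝ) (σ : V → Bool) :
    lin (fun v => ∑ i, k i v) σ = ∑ i, lin (k i) σ := by
  unfold lin
  rw [Finset.sum_comm]
  exact Finset.sum_congr rfl fun v _ => by rw [Finset.sum_mul]

lemma exists_lin_edgeObs (κ : ℝ) (a : V × V → ℝ) :
    ∃ k : V → ℝ, ∀ σ, ∑ p, a p * edgeObs G κ p σ = lin k σ := by
  refine ⟨fun v => ∑ p : V × V, if G.Adj p.1 p.2 then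
    (ind {p.1} (a p / 2) + ind {p.2} (κ * a p / 2)) v else 0, fun σ => ?_⟩
  have := lin_sum (fun (p : V × V) v => if G.Adj p.1 p.2 then
    (ind {p.1} (a p / 2) + ind {p.2} (κ * a p / 2)) v else 0) σ
  rw [this]
  refine Finset.sum_congr rfl fun p _ => ?_
  unfold edgeObs
  split_ifs with hp
  · change _ = lin (ind {p.1} (a p / 2) + ind {p.2} (κ * a p / 2)) σ
    rw [lin_add, lin_ind, lin_ind]
    simp
    ring
  · simp [lin]

/-- Observing the edge observables through noise of level `t` moves the coupling towards zero and
changes the external field: `1 + s t X = exp (-γ X² + c s X)` for `X ∈ {-1, 0, 1}` and `s = ±1`. -/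
lemma obs_isW {κ : ℝ} (hκ : κ = 1 ∨ κ = -1) (J : ℝ) (h : V → ℝ) {t : ℝ} (ht0 : 0 ≤ t) (ht1 : t < 1) :
    ∃ C : ℝ, 0 < C ∧ ∀ τ : V × V → Bool, ∃ k : V → ℝ, ∀ σ,
      obs (isW G univ J h) (edgeObs G κ) t τ σ =
        C * isW G univ (J - κ * (-Real.log (1 - t ^ 2) / 2)) (h + k) σ := by
  have hp : 0 < 1 + t := by linarith
  have hm : 0 < 1 - t := by linarith
  have hl : Real.log (1 - t ^ 2) = Real.log (1 + t) + Real.log (1 - t) := by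
    rw [← Real.log_mul hp.ne' hm.ne']; congr 1; ring
  set γ := -Real.log (1 - t ^ 2) / 2 with hγ
  set c := (Real.log (1 + t) - Real.log (1 - t)) / 2 with hc
  have key : ∀ b p σ, 1 + sp b * (t * edgeObs G κ p σ) =
      Real.exp (-γ * edgeObs G κ p σ ^ 2 + c * sp b * edgeObs G κ p σ) := by
    intro b p σ
    have e1 : -γ + c = Real.log (1 + t) := by rw [hγ, hc, hl]; ring
    have e2 : -γ - c = Real.log (1 - t) := by rw [hγ, hc, hl]; ring
    have f1 : Real.exp (-γ + c) = 1 + t := by rw [e1, Real.exp_log hp]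
    have f2 : Real.exp (-γ - c) = 1 - t := by rw [e2, Real.exp_log hm]
    rcases edgeObs_cases G hκ p σ with h | h | h <;> cases b <;> rw [h]
    · simp
    · simp
    · rw [show -γ * 1 ^ 2 + c * sp false * 1 = -γ - c by simp; ring, f2]; simp; ring
    · rw [show -γ * 1 ^ 2 + c * sp true * 1 = -γ + c by simp, f1]; simp
    · rw [show -γ * (-1) ^ 2 + c * sp false * (-1) = -γ + c by simp, f1]; simp
    · rw [show -γ * (-1) ^ 2 + c * sp true * (-1) = -γ - c by simp; ring, f2]; simp; ring
  refine ⟨(1 / 2) ^ Fintype.card (V × V) *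
    Real.exp (-γ * ∑ p : V × V, if G.Adj p.1 p.2 then (1 / 2 : ℝ) else 0), by positivity,
    fun τ => ?_⟩
  obtain ⟨k, hk⟩ := exists_lin_edgeObs G κ fun p => c * sp (τ p)
  refine ⟨k, fun σ => ?_⟩
  have e1 : ∏ p, ((1 + sp (τ p) * (t * edgeObs G κ p σ)) / 2) =
      (1 / 2) ^ Fintype.card (V × V) *
        Real.exp (-γ * ∑ p, edgeObs G κ p σ ^ 2 + lin k σ) := by
    rw [← hk, Finset.mul_sum, ← Finset.sum_add_distrib, Real.exp_sum, ← Finset.card_univ,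
      ← Finset.prod_const, ← Finset.prod_mul_distrib]
    exact Finset.prod_congr rfl fun p _ => by rw [key]; ring
  unfold obs
  rw [e1, sum_edgeObs_sq G hκ]
  unfold isW
  rw [lin_add, mul_left_comm, mul_assoc, ← Real.exp_add, ← Real.exp_add]
  congr 2
  ring

/-- The total squared displacement of the edge observables is controlled by the entropy. By duality
the displacement vector of the spins is tested against itself in the transport inequality. -/
lemma edge_displacement {κ : ℝ} (hκ : κ = 1 ∨ κ = -1) {Δ : ℕ} {J ℓ : ℝ} (hℓ : 0 < ℓ)
    (hvar : ∀ h x : V → ℝ, VarLe (isW G univ J h) (lin x) (ℓ * ∑ v, x v ^ 2))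
    (hdeg : ∀ v, G.degree v ≤ Δ) (h : V → ℝ) {f : (V → Bool) → ℝ} (hf : ∀ σ, 0 < f σ) :
    ∑ p, (∑ σ, isW G univ J h σ * (f σ - (∑ σ, isW G univ J h σ * f σ) / ∑ σ, isW G univ J h σ) *
        edgeObs G κ p σ) ^ 2 ≤
      (2 * Δ * ℓ) * (∑ σ, isW G univ J h σ * f σ) * ent (isW G univ J h) f := by
  set w := isW G univ J h with hw
  have hwp : ∀ σ, 0 < w σ := isW_pos G univ J h
  set a := ∑ σ, w σ * f σ with ha
  set m := a / ∑ σ, w σ with hm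
  set M : V → ℝ := fun v => ∑ σ, w σ * (f σ - m) * sp (σ v) with hM
  have ha0 : 0 < a := sum_pos' fun x => mul_pos (hwp x) (hf x)
  have hent := ent_nonneg hwp hf
  have hMlin : ∑ σ, w σ * f σ * lin M σ - m * ∑ σ, w σ * lin M σ = ∑ v, M v ^ 2 := by
    have : ∀ v, M v ^ 2 = ∑ σ, w σ * (f σ - m) * (M v * sp (σ v)) := fun v => by
      rw [sq]; nth_rewrite 2 [hM]; rw [Finset.mul_sum]
      exact Finset.sum_congr rfl fun σ _ => by ring
    simp_rw [this]
    rw [Finset.sum_comm, Finset.mul_sum, ← Finset.sum_sub_distrib]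
    refine Finset.sum_congr rfl fun σ _ => ?_
    rw [← Finset.mul_sum]
    unfold lin
    ring
  have hMbound : ∑ v, M v ^ 2 ≤ 2 * ℓ * a * ent w f := by
    rcases (Finset.sum_nonneg fun v _ => sq_nonneg (M v) : 0 ≤ ∑ v, M v ^ 2).eq_or_lt with h0 | h0
    · rw [← h0]; positivity
    · have ht := transport (X := lin M) hwp hf (mul_pos hℓ h0) fun t => by
        have := hvar (h + t • M) M
        have e : isW G univ J (h + t • M) = fun σ => w σ * Real.exp (t * lin M σ) := by
          funext σ; rw [isW_add, lin_smul]
        rwa [e] at this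
      rw [← ha, ← hm, hMlin, sq] at ht
      have : (∑ v, M v ^ 2) * (∑ v, M v ^ 2) ≤ (∑ v, M v ^ 2) * (2 * ℓ * a * ent w f) := by
        linarith
      exact le_of_mul_le_mul_left this h0
  have hD : ∀ p, (∑ σ, w σ * (f σ - m) * edgeObs G κ p σ) ^ 2 ≤
      (if G.Adj p.1 p.2 then M p.1 ^ 2 / 2 else 0) +
        (if G.Adj p.1 p.2 then M p.2 ^ 2 / 2 else 0) := by
    intro p
    unfold edgeObs
    split_ifs
    · have : ∑ σ, w σ * (f σ - m) * ((sp (σ p.1) + κ * sp (σ p.2)) / 2) =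
          (M p.1 + κ * M p.2) / 2 := by
        simp only [hM]
        rw [Finset.mul_sum, ← Finset.sum_add_distrib, Finset.sum_div]
        exact Finset.sum_congr rfl fun σ _ => by ring
      rw [this]
      rcases hκ with rfl | rfl <;> nlinarith [sq_nonneg (M p.1 - M p.2), sq_nonneg (M p.1 + M p.2)]
    · simp
  refine (Finset.sum_le_sum fun p _ => hD p).trans ?_
  rw [Finset.sum_add_distrib, Fintype.sum_prod_type, Fintype.sum_prod_type_right]
  have hrow : ∀ u, ∑ v, (if G.Adj u v then M u ^ 2 / 2 else 0) ≤ Δ * (M u ^ 2 / 2) := by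
    intro u
    rw [← Finset.sum_filter, Finset.sum_const, nsmul_eq_mul, ← SimpleGraph.neighborFinset_eq_filter,
      SimpleGraph.card_neighborFinset_eq_degree]
    exact mul_le_mul_of_nonneg_right (by exact_mod_cast hdeg u) (by positivity)
  have h1 := Finset.sum_le_sum fun u (_ : u ∈ univ) => hrow u
  have h2 : ∀ u, ∑ v, (if G.Adj v u then M u ^ 2 / 2 else 0) =
      ∑ v, (if G.Adj u v then M u ^ 2 / 2 else 0) := fun u => by simp only [G.adj_comm]
  simp only [h2]
  rw [← Finset.mul_sum, ← Finset.sum_div] at h1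
  have : (Δ : ℝ) * ∑ v, M v ^ 2 ≤ Δ * (2 * ℓ * a * ent w f) := by gcongr
  linarith

/-- One round of the localization: approximate tensorization at a weaker coupling implies it at
coupling `J`, at the cost of the relative entropy loss of the noisy observation. -/
lemma at_step {κ : ℝ} (hκ : κ = 1 ∨ κ = -1) {Δ : ℕ} {J ℓ : ℝ} (hℓ : 0 < ℓ)
    (hvar : ∀ h x : V → ℝ, VarLe (isW G univ J h) (lin x) (ℓ * ∑ v, x v ^ 2))
    (hdeg : ∀ v, G.degree v ≤ Δ) {t C : ℝ} (ht0 : 0 ≤ t) (ht1 : t < 1) (hC : 0 ≤ C)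
    (hat : ∀ (h : V → ℝ) (f : (V → Bool) → ℝ), (∀ σ, 0 < f σ) →
      ent (isW G univ (J - κ * (-Real.log (1 - t ^ 2) / 2)) h) f ≤
        C * siteEnt (isW G univ (J - κ * (-Real.log (1 - t ^ 2) / 2)) h) f)
    (h : V → ℝ) (f : (V → Bool) → ℝ) (hf : ∀ σ, 0 < f σ) :
    (1 - ((1 - t) ^ Fintype.card (V × V))⁻¹ *
      (2 * Δ * ℓ * t ^ 2 + 2 ^ (Fintype.card (V × V) + 1) * t ^ 4)) * ent (isW G univ J h) f ≤
      C * siteEnt (isW G univ J h) f := by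
  have hwp : ∀ σ, 0 < isW G univ J h σ := isW_pos G univ J h
  have hX := abs_edgeObs_le G hκ
  have hloss := obs_loss hwp hf hX ht0 ht1 (edge_displacement G hκ hℓ hvar hdeg h hf)
  obtain ⟨c, hc, hk⟩ := obs_isW G hκ J h ht0 ht1
  have hτ : ∀ τ, ent (obs (isW G univ J h) (edgeObs G κ) t τ) f ≤
      C * siteEnt (obs (isW G univ J h) (edgeObs G κ) t τ) f := by
    intro τ
    obtain ⟨k, hk⟩ := hk τ
    rw [funext hk, ent_smul c hc, siteEnt_smul c hc, mul_left_comm]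
    exact mul_le_mul_of_nonneg_left (hat _ f hf) hc.le
  have h1 := Finset.sum_le_sum fun τ (_ : τ ∈ univ) => hτ τ
  rw [← Finset.mul_sum] at h1
  have h2 := siteEnt_superadd hf (fun τ x => obs_pos hwp hX ht0 ht1 τ x) hwp
    (sum_obs (isW G univ J h) (edgeObs G κ) t)
  have h3 := mul_le_mul_of_nonneg_left h2 hC
  linarith

end AT

section AT

set_option linter.unusedSectionVars false

variable {V : Type} [Fintype V] [DecidableEq V] (G : SimpleGraph V) [DecidableRel G.Adj]

lemma isProd_isW_zero (h : V → ℝ) : IsProd (isW G univ 0 h) := by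
  intro u v huv σ b
  refine ⟨Real.exp (h u * (sp b - sp (σ u))), Real.exp_pos _, fun b' => ?_⟩
  unfold isW
  rw [← Real.exp_add, Function.update_comm huv, lin_update, Function.update_of_ne huv]
  congr 1
  ring

lemma exp_neg_two_mul_le {x : ℝ} (h0 : 0 ≤ x) (h1 : x ≤ 1 / 2) : Real.exp (-(2 * x)) ≤ 1 - x := by
  have h2 := Real.add_one_le_exp (2 * x)
  have h3 : Real.exp (-(2 * x)) * Real.exp (2 * x) = 1 := by rw [← Real.exp_add]; simp
  have h4 := Real.exp_pos (-(2 * x))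
  have h5 : Real.exp (-(2 * x)) * (2 * x + 1) ≤ 1 := by nlinarith
  by_contra hlt
  push Not at hlt
  nlinarith

/-- Approximate tensorization at coupling `J` with the constant obtained by integrating the relative
entropy loss rate `16 Δ ℓ` (up to a factor `2`) along the path of couplings from `0` to `J`. -/
lemma approx_tensor {Δ : ℕ} (hΔ : 3 ≤ Δ) {δ J : ℝ} (hδ0 : 0 < δ)
    (hJ : Real.exp (2 * |J|) ≤ ((Δ : ℝ) - δ) / ((Δ : ℝ) - 2 + δ))
    (hdeg : ∀ v, G.degree v ≤ Δ) (h : V → ℝ) (f : (V → Bool) → ℝ) (hf : ∀ σ, 0 < f σ) :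
    ent (isW G univ J h) f ≤
      Real.exp (32 * Δ * (1 + Δ / δ) * |J|) * siteEnt (isW G univ J h) f := by
  set ℓ : ℝ := 1 + Δ / δ with hℓdef
  have hℓ : 0 < ℓ := by positivity
  have hΔ0 : (0 : ℝ) < Δ := by exact_mod_cast (by omega : 0 < Δ)
  set m := Fintype.card (V × V) with hm
  obtain ⟨κ, hκ, hJκ⟩ : ∃ κ : ℝ, (κ = 1 ∨ κ = -1) ∧ J = κ * |J| := by
    rcases le_total 0 J with h0 | h0
    · exact ⟨1, Or.inl rfl, by rw [abs_of_nonneg h0, one_mul]⟩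
    · exact ⟨-1, Or.inr rfl, by rw [abs_of_nonpos h0]; ring⟩
  have hκ1 : |κ| = 1 := by rcases hκ with rfl | rfl <;> simp
  -- The noise level of one round when the path is cut into `N` rounds.
  set T : ℝ → ℝ := fun x => Real.sqrt (1 - Real.exp (-(2 * x))) with hT
  have hTc : Continuous T := by fun_prop
  have hT0 : T 0 = 0 := by simp [hT]
  have hlim : Filter.Tendsto (fun N : ℕ => |J| / (N : ℝ)) Filter.atTop (nhds 0) :=
    tendsto_const_div_atTop_nhds_zero_nat |J|
  have hev : ∀ {F : ℝ → ℝ} (c : ℝ), Continuous F → F 0 < c →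
      ∀ᶠ N : ℕ in Filter.atTop, F (|J| / (N : ℝ)) < c := fun c hF h0 =>
    ((hF.tendsto 0).comp hlim).eventually (gt_mem_nhds h0)
  -- For `N` large, `t = T (|J| / N)` makes the prefactor `(1 - t) ^ (-m)` at most `2` and the `t ^ 4`
  -- term smaller than the `t ^ 2` term, although both depend on the graph.
  have ev1 := hev (F := fun x => - (1 - T x) ^ m) (-(1 / 2)) (by fun_prop) (by simp [hT0]; norm_num)
  have ev2 := hev (F := fun x => 2 ^ (m + 1) * T x ^ 2) (2 * Δ * ℓ) (by fun_prop)
    (by simp [hT0]; positivity)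
  have ev3 := hev (F := fun x => 16 * Δ * ℓ * x) (1 / 2) (by fun_prop) (by simp)
  have ev4 := hev (F := T) 1 hTc (by simp [hT0])
  obtain ⟨N, ⟨⟨⟨⟨h1, h2⟩, h3⟩, h4⟩, hN⟩⟩ := ((((ev1.and ev2).and ev3).and ev4).and
    (Filter.eventually_ge_atTop 1)).exists
  have hN0 : (0 : ℝ) < N := by exact_mod_cast hN
  set γ := |J| / (N : ℝ) with hγ
  have hγ0 : 0 ≤ γ := by positivity
  set t := T γ with ht
  have ht0 : 0 ≤ t := Real.sqrt_nonneg _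
  have hexp1 : Real.exp (-(2 * γ)) ≤ 1 := Real.exp_le_one_iff.2 (by linarith)
  have hsq : t ^ 2 = 1 - Real.exp (-(2 * γ)) := Real.sq_sqrt (by linarith)
  have hsqle : t ^ 2 ≤ 2 * γ := by rw [hsq]; linarith [Real.add_one_le_exp (-(2 * γ))]
  have hγt : -Real.log (1 - t ^ 2) / 2 = γ := by rw [hsq, sub_sub_cancel, Real.log_exp]; ring
  set ρ := ((1 - t) ^ m)⁻¹ * (2 * Δ * ℓ * t ^ 2 + 2 ^ (m + 1) * t ^ 4) with hρ
  have hρle : ρ ≤ 16 * Δ * ℓ * γ := by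
    have a1 : ((1 - t) ^ m)⁻¹ ≤ 2 := by
      rw [inv_le_comm₀ (by linarith) (by norm_num)]; linarith
    have a2 : 2 ^ (m + 1) * t ^ 4 ≤ 2 * Δ * ℓ * t ^ 2 := by
      have := mul_le_mul_of_nonneg_right h2.le (sq_nonneg t)
      calc _ = 2 ^ (m + 1) * t ^ 2 * t ^ 2 := by ring
        _ ≤ _ := this
    have a3 : ρ ≤ 2 * (2 * Δ * ℓ * t ^ 2 + 2 ^ (m + 1) * t ^ 4) :=
      mul_le_mul_of_nonneg_right a1 (by positivity)
    have a4 : Δ * ℓ * t ^ 2 ≤ Δ * ℓ * (2 * γ) := by gcongr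
    linarith
  have hr : Real.exp (-(2 * (16 * Δ * ℓ * γ))) ≤ 1 - ρ :=
    (exp_neg_two_mul_le (by positivity) h3.le).trans (by linarith)
  have hr0 : 0 < 1 - ρ := (Real.exp_pos _).trans_le hr
  have main : ∀ k : ℕ, k ≤ N → ∀ (h : V → ℝ) (f : (V → Bool) → ℝ), (∀ σ, 0 < f σ) →
      ent (isW G univ (κ * γ * k) h) f ≤
        ((1 - ρ) ^ k)⁻¹ * siteEnt (isW G univ (κ * γ * k) h) f := by
    intro k
    induction k with
    | zero =>
      intro _ h f hf
      simpa using ent_le_siteEnt_of_isProd (isW_pos G univ 0 h) hf (isProd_isW_zero G h)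
    | succ k ih =>
      intro hk h f hf
      have habs : |κ * γ * ((k + 1 : ℕ) : ℝ)| ≤ |J| := by
        rw [abs_mul, abs_mul, hκ1, abs_of_nonneg hγ0, one_mul, Nat.abs_cast, hγ,
          div_mul_eq_mul_div, div_le_iff₀ hN0]
        have : ((k + 1 : ℕ) : ℝ) ≤ N := by exact_mod_cast hk
        gcongr
      have hvar := varLe_unif G hδ0 (contraction_of_exp_le hΔ hδ0
        ((Real.exp_le_exp.2 (by linarith)).trans hJ : Real.exp (2 * |κ * γ * ((k + 1 : ℕ) : ℝ)|) ≤ _))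
        hdeg
      have hs := at_step G hκ hℓ hvar hdeg ht0 h4 (C := ((1 - ρ) ^ k)⁻¹) (by positivity) (by
        rw [hγt, show κ * γ * ((k + 1 : ℕ) : ℝ) - κ * γ = κ * γ * k by push_cast; ring]
        exact ih (by omega)) h f hf
      rw [← hm, ← hρ] at hs
      rwa [pow_succ, mul_inv, mul_right_comm _ (1 - ρ)⁻¹, ← div_eq_mul_inv, le_div_iff₀' hr0]
  have hfin := main N le_rfl h f hf
  have hJN : κ * γ * N = J := by
    rw [hγ, mul_assoc, div_mul_cancel₀ _ hN0.ne', ← hJκ]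
  rw [hJN] at hfin
  refine hfin.trans (mul_le_mul_of_nonneg_right ?_ ?_)
  · rw [inv_le_comm₀ (by positivity) (Real.exp_pos _), ← Real.exp_neg]
    calc Real.exp (-(32 * Δ * ℓ * |J|)) = Real.exp (-(2 * (16 * Δ * ℓ * γ))) ^ N := by
          rw [← Real.exp_nat_mul]
          congr 1
          rw [hγ]
          field_simp
          ring
      _ ≤ (1 - ρ) ^ N := by gcongr
  · refine Finset.sum_nonneg fun v _ => mul_nonneg (by norm_num) (Finset.sum_nonneg fun σ _ => ?_)
    exact ent_nonneg (fun _ => isW_pos G univ J h _) fun _ => hf _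

end AT

/-! ### Entropy decay and mixing of the Glauber dynamics -/

section Glauber

set_option linter.unusedSectionVars false

variable {V : Type} [Fintype V] [DecidableEq V]

lemma sum_agree (v : V) (σ : V → Bool) (F : (V → Bool) → ℝ) :
    ∑ σ', (if ∀ u, u ≠ v → σ' u = σ u then F σ' else 0) =
      ∑ b, F (Function.update σ v b) := by
  rw [← Finset.sum_filter]
  refine Finset.sum_nbij' (fun σ' => σ' v) (fun b => Function.update σ v b) ?_ ?_ ?_ ?_ ?_
  · simp
  · intro b _
    simp only [Finset.mem_filter, Finset.mem_univ, true_and]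
    intro u hu
    simp [hu]
  · intro σ' hσ'
    simp only [Finset.mem_filter, Finset.mem_univ, true_and] at hσ'
    funext u
    by_cases hu : u = v
    · subst hu; simp
    · simp [hu, hσ' u hu]
  · simp
  · intro σ' hσ'
    simp only [Finset.mem_filter, Finset.mem_univ, true_and] at hσ'
    congr 1
    funext u
    by_cases hu : u = v
    · subst hu; simp
    · simp [hu, hσ' u hu]

/-- The Glauber dynamics averages the single-site conditional expectations. -/
lemma glauber_mulVec (μ f : (V → Bool) → ℝ) (σ : V → Bool) :
    (glauberMatrix μ).mulVec f σ = (Fintype.card V : ℝ)⁻¹ * ∑ v, avg μ v f σ := by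
  simp only [Matrix.mulVec, dotProduct, glauberMatrix, Matrix.of_apply, mul_assoc, Finset.sum_mul]
  rw [← Finset.mul_sum, Finset.sum_comm]
  congr 1
  refine Finset.sum_congr rfl fun v _ => ?_
  simp only [ite_mul, zero_mul]
  rw [sum_agree v σ fun σ' => μ σ' / (∑ j, μ (Function.update σ v j)) * f σ']
  unfold avg
  rw [Finset.sum_div]
  exact Finset.sum_congr rfl fun b _ => by ring

lemma glauber_reversible (μ : (V → Bool) → ℝ) (σ σ' : V → Bool) :
    μ σ * glauberMatrix μ σ σ' = μ σ' * glauberMatrix μ σ' σ := by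
  simp only [glauberMatrix, Matrix.of_apply]
  rw [mul_left_comm, mul_left_comm (μ σ')]
  congr 1
  rw [Finset.mul_sum, Finset.mul_sum]
  refine Finset.sum_congr rfl fun v _ => ?_
  by_cases h : ∀ u, u ≠ v → σ' u = σ u
  · have h' : ∀ u, u ≠ v → σ u = σ' u := fun u hu => (h u hu).symm
    have e : ∀ j, Function.update σ v j = Function.update σ' v j := fun j => by
      funext u
      by_cases hu : u = v
      · subst hu; simp
      · simp [hu, h u hu]
    rw [if_pos h, if_pos h']
    simp_rw [e]
    ring
  · have h' : ¬ ∀ u, u ≠ v → σ u = σ' u := fun h' => h fun u hu => (h' u hu).symm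
    rw [if_neg h, if_neg h']
    simp

lemma glauber_pow_reversible (μ : (V → Bool) → ℝ) (t : ℕ) : ∀ σ σ' : V → Bool,
    μ σ * (glauberMatrix μ ^ t) σ σ' = μ σ' * (glauberMatrix μ ^ t) σ' σ := by
  induction t with
  | zero =>
    intro σ σ'
    by_cases h : σ = σ'
    · rw [h]
    · simp [Matrix.one_apply_ne h, Matrix.one_apply_ne (Ne.symm h)]
  | succ t ih =>
    intro σ σ'
    nth_rewrite 1 [pow_succ]
    rw [pow_succ', Matrix.mul_apply, Matrix.mul_apply, Finset.mul_sum, Finset.mul_sum]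
    refine Finset.sum_congr rfl fun ζ _ => ?_
    rw [← mul_assoc, ih, mul_right_comm, glauber_reversible]
    ring

lemma pow_mulVec_succ (P : Matrix (V → Bool) (V → Bool) ℝ) (t : ℕ) (f : (V → Bool) → ℝ) :
    (P ^ (t + 1)).mulVec f = P.mulVec ((P ^ t).mulVec f) := by
  rw [pow_succ', Matrix.mulVec_mulVec]

variable [Nonempty V] {μ : (V → Bool) → ℝ}

lemma glauber_mulVec_one (hμ : ∀ σ, 0 < μ σ) :
    (glauberMatrix μ).mulVec (fun _ => 1) = fun _ => 1 := by
  funext σ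
  rw [glauber_mulVec]
  have : ∀ v, avg μ v (fun _ => 1) σ = 1 := fun v => by
    unfold avg
    simp only [mul_one]
    exact div_self (sum_pos' fun _ => hμ _).ne'
  simp [this]

lemma glauber_pow_mulVec_one (hμ : ∀ σ, 0 < μ σ) (t : ℕ) :
    (glauberMatrix μ ^ t).mulVec (fun _ => 1) = fun _ => 1 := by
  induction t with
  | zero => simp
  | succ t ih => rw [pow_mulVec_succ, ih, glauber_mulVec_one hμ]

lemma glauber_mulVec_pos (hμ : ∀ σ, 0 < μ σ) {f : (V → Bool) → ℝ} (hf : ∀ σ, 0 < f σ)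
    (σ : V → Bool) : 0 < (glauberMatrix μ).mulVec f σ := by
  rw [glauber_mulVec]
  have : (0 : ℝ) < Fintype.card V := by exact_mod_cast Fintype.card_pos
  exact mul_pos (by positivity) (sum_pos' fun v => avg_pos hμ hf v σ)

lemma glauber_pow_mulVec_pos (hμ : ∀ σ, 0 < μ σ) {f : (V → Bool) → ℝ} (hf : ∀ σ, 0 < f σ)
    (t : ℕ) : ∀ σ, 0 < (glauberMatrix μ ^ t).mulVec f σ := by
  induction t with
  | zero => simpa using hf
  | succ t ih => rw [pow_mulVec_succ]; exact glauber_mulVec_pos hμ ih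

lemma glauber_sum (hμ : ∀ σ, 0 < μ σ) (f : (V → Bool) → ℝ) :
    ∑ σ, μ σ * (glauberMatrix μ).mulVec f σ = ∑ σ, μ σ * f σ := by
  have hn : (Fintype.card V : ℝ) ≠ 0 := by exact_mod_cast Fintype.card_ne_zero
  have h1 : ∀ σ, μ σ * (glauberMatrix μ).mulVec f σ =
      (Fintype.card V : ℝ)⁻¹ * ∑ v, μ σ * avg μ v f σ := fun σ => by
    rw [glauber_mulVec, mul_left_comm, Finset.mul_sum (a := μ σ)]
  simp_rw [h1]
  rw [← Finset.mul_sum, Finset.sum_comm]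
  simp_rw [sum_avg hμ]
  rw [Finset.sum_const, Finset.card_univ, nsmul_eq_mul, inv_mul_cancel_left₀ hn]

lemma glauber_pow_sum (hμ : ∀ σ, 0 < μ σ) (f : (V → Bool) → ℝ) (t : ℕ) :
    ∑ σ, μ σ * (glauberMatrix μ ^ t).mulVec f σ = ∑ σ, μ σ * f σ := by
  induction t with
  | zero => simp
  | succ t ih => rw [pow_mulVec_succ, glauber_sum hμ, ih]

/-- One step of the dynamics loses at least the fraction `1 / n` of the single-site entropies, by
convexity of `x log x`. -/
lemma ent_glauber_le (hμ : ∀ σ, 0 < μ σ) {f : (V → Bool) → ℝ} (hf : ∀ σ, 0 < f σ) :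
    ent μ ((glauberMatrix μ).mulVec f) ≤ ent μ f - (Fintype.card V : ℝ)⁻¹ * siteEnt μ f := by
  have hn : (Fintype.card V : ℝ) ≠ 0 := by exact_mod_cast Fintype.card_ne_zero
  have hn0 : (0 : ℝ) < Fintype.card V := by exact_mod_cast Fintype.card_pos
  have h1 : ent μ f - (Fintype.card V : ℝ)⁻¹ * siteEnt μ f =
      (Fintype.card V : ℝ)⁻¹ * ∑ v, ent μ (avg μ v f) := by
    unfold siteEnt
    simp_rw [site_eq hμ]
    rw [Finset.sum_sub_distrib, Finset.sum_const, Finset.card_univ, nsmul_eq_mul, mul_sub,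
      inv_mul_cancel_left₀ hn]
    ring
  rw [h1]
  unfold ent
  simp_rw [glauber_sum hμ, sum_avg hμ]
  rw [Finset.sum_sub_distrib, Finset.sum_const, Finset.card_univ, nsmul_eq_mul, mul_sub,
    inv_mul_cancel_left₀ hn, Finset.sum_comm, Finset.mul_sum]
  refine sub_le_sub_right (Finset.sum_le_sum fun σ _ => ?_) _
  have hc := Real.convexOn_mul_log.map_sum_le (t := univ) (w := fun _ : V => (Fintype.card V : ℝ)⁻¹)
    (p := fun v => avg μ v f σ) (fun _ _ => by positivity) (by simp [hn])
    (fun v _ => (avg_pos hμ hf v σ).le)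
  simp only [smul_eq_mul, ← Finset.mul_sum] at hc
  rw [glauber_mulVec]
  calc _ = μ σ * ((Fintype.card V : ℝ)⁻¹ * (∑ v, avg μ v f σ) *
        Real.log ((Fintype.card V : ℝ)⁻¹ * ∑ v, avg μ v f σ)) := by ring
    _ ≤ μ σ * ((Fintype.card V : ℝ)⁻¹ * ∑ v, avg μ v f σ * Real.log (avg μ v f σ)) :=
        mul_le_mul_of_nonneg_left hc (hμ σ).le
    _ = _ := by
        rw [mul_left_comm, Finset.mul_sum (a := μ σ)]
        congr 1
        exact Finset.sum_congr rfl fun v _ => by ring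

lemma ent_glauber_pow_le (hμ : ∀ σ, 0 < μ σ) {C : ℝ} (hC : 1 ≤ C)
    (hat : ∀ f : (V → Bool) → ℝ, (∀ σ, 0 < f σ) → ent μ f ≤ C * siteEnt μ f)
    {f : (V → Bool) → ℝ} (hf : ∀ σ, 0 < f σ) (t : ℕ) :
    ent μ ((glauberMatrix μ ^ t).mulVec f) ≤
      Real.exp (-(t / (C * Fintype.card V))) * ent μ f := by
  have hn0 : (0 : ℝ) < Fintype.card V := by exact_mod_cast Fintype.card_pos
  have hC0 : 0 < C := by linarith
  induction t with
  | zero => simp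
  | succ t ih =>
    rw [pow_mulVec_succ]
    have hpos := glauber_pow_mulVec_pos hμ hf t
    have h1 := ent_glauber_le hμ hpos
    have h2 := hat _ hpos
    have he := ent_nonneg hμ hpos
    set E := ent μ ((glauberMatrix μ ^ t).mulVec f)
    set S := siteEnt μ ((glauberMatrix μ ^ t).mulVec f)
    have h3 : E / (C * Fintype.card V) ≤ (Fintype.card V : ℝ)⁻¹ * S := by
      rw [div_le_iff₀ (by positivity)]
      have : (Fintype.card V : ℝ)⁻¹ * S * (C * Fintype.card V) = C * S := by field_simp
      linarith
    have h4 := Real.add_one_le_exp (-(1 / (C * Fintype.card V)))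
    have h5 : Real.exp (-(((t + 1 : ℕ) : ℝ) / (C * Fintype.card V))) =
        Real.exp (-(1 / (C * Fintype.card V))) * Real.exp (-(t / (C * Fintype.card V))) := by
      rw [← Real.exp_add]; congr 1; push_cast; ring
    calc _ ≤ E - E / (C * Fintype.card V) := by linarith
      _ = (-(1 / (C * Fintype.card V)) + 1) * E := by ring
      _ ≤ Real.exp (-(1 / (C * Fintype.card V))) * E := mul_le_mul_of_nonneg_right h4 he
      _ ≤ Real.exp (-(1 / (C * Fintype.card V))) *
          (Real.exp (-(t / (C * Fintype.card V))) * ent μ f) :=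
        mul_le_mul_of_nonneg_left ih (Real.exp_pos _).le
      _ = _ := by rw [h5, mul_assoc]

/-- Mixing from entropy decay. By reversibility the density of the law at time `t` from `x` is
`P ^ t` applied to the point density; averaging that density with `1` makes it positive and costs a
factor `2`. -/
lemma tv_le_of_ent (hμ : ∀ σ, 0 < μ σ) (hμ1 : ∑ σ, μ σ = 1) {C : ℝ} (hC : 1 ≤ C)
    (hat : ∀ f : (V → Bool) → ℝ, (∀ σ, 0 < f σ) → ent μ f ≤ C * siteEnt μ f)
    (x : V → Bool) (t : ℕ)
    (ht : Real.exp (-(t / (C * Fintype.card V))) * Real.log (1 / μ x) ≤ 1 / 32) :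
    tvDist (fun y => (glauberMatrix μ ^ t) x y) μ ≤ 1 / 4 := by
  have hx1 : μ x ≤ 1 := by
    rw [← hμ1]; exact Finset.single_le_sum (fun σ _ => (hμ σ).le) (mem_univ x)
  have hone : 1 ≤ 1 / μ x := by rw [le_div_iff₀ (hμ x)]; linarith
  set g : (V → Bool) → ℝ := Pi.single x (1 / μ x) with hg
  set f : (V → Bool) → ℝ := fun y => (1 / 2) * g y + (1 / 2) * 1 with hf
  have hg0 : ∀ y, 0 ≤ g y ∧ g y ≤ 1 / μ x := by
    intro y
    by_cases hy : y = x
    · subst hy; simp only [hg, Pi.single_eq_same]; constructor <;> linarith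
    · simp only [hg, Pi.single_eq_of_ne hy]; constructor <;> linarith
  have hfpos : ∀ y, 0 < f y := fun y => by simp only [hf]; linarith [(hg0 y).1]
  have hfle : ∀ y, f y ≤ 1 / μ x := fun y => by simp only [hf]; linarith [(hg0 y).2]
  have hsum : ∑ y, μ y * f y = 1 := by
    simp only [hf, mul_add, Finset.sum_add_distrib, mul_one, ← Finset.sum_mul, hμ1]
    have : ∑ y, μ y * (1 / 2 * g y) = 1 / 2 := by
      rw [Finset.sum_eq_single x]
      · simp only [hg, Pi.single_eq_same]
        have := (hμ x).ne'
        field_simp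
      · intro y _ hy; simp [hg, hy]
      · simp
    rw [this]; norm_num
  have hent : ent μ f ≤ Real.log (1 / μ x) := by
    unfold ent
    rw [hsum, hμ1]
    simp only [div_one, Real.log_one, mul_zero, sub_zero]
    calc _ ≤ ∑ y, μ y * f y * Real.log (1 / μ x) := Finset.sum_le_sum fun y _ =>
          mul_le_mul_of_nonneg_left (Real.log_le_log (hfpos y) (hfle y))
            (mul_pos (hμ y) (hfpos y)).le
      _ = _ := by rw [← Finset.sum_mul, hsum, one_mul]
  set F := (glauberMatrix μ ^ t).mulVec f with hF
  have hFpos : ∀ y, 0 < F y := glauber_pow_mulVec_pos hμ hfpos t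
  have hFsum : ∑ y, μ y * F y = 1 := by rw [glauber_pow_sum hμ, hsum]
  have hFent : ent μ F ≤ 1 / 32 := (ent_glauber_pow_le hμ hC hat hfpos t).trans
    ((mul_le_mul_of_nonneg_left hent (Real.exp_pos _).le).trans ht)
  have hdens : ∀ y, (glauberMatrix μ ^ t) x y - μ y = μ y * (2 * (F y - 1)) := by
    intro y
    have h1 : F y = (1 / 2) * ((glauberMatrix μ ^ t) y x * (1 / μ x)) + 1 / 2 := by
      have e : f = (1 / 2 : ℝ) • g + (1 / 2 : ℝ) • (fun _ => 1) := by
        funext y; simp [hf]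
      rw [hF, e, Matrix.mulVec_add, Matrix.mulVec_smul, Matrix.mulVec_smul,
        glauber_pow_mulVec_one hμ]
      simp [hg]
    have h2 := glauber_pow_reversible μ t x y
    have h3 := (hμ x).ne'
    rw [h1]
    have h4 : (glauberMatrix μ ^ t) x y = μ y * (glauberMatrix μ ^ t) y x / μ x := by
      rw [eq_div_iff h3, mul_comm]; exact h2
    rw [h4]
    ring
  set X : (V → Bool) → ℝ := fun y => if 0 ≤ F y - 1 then 1 else -1 with hX
  have hXabs : ∀ y, |F y - 1| = (F y - 1) * X y := fun y => by
    simp only [hX]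
    split_ifs with h0
    · rw [abs_of_nonneg h0, mul_one]
    · rw [abs_of_neg (not_le.1 h0)]; ring
  have htv : tvDist (fun y => (glauberMatrix μ ^ t) x y) μ =
      ∑ y, μ y * F y * X y - ∑ y, μ y * X y := by
    unfold tvDist
    rw [← Finset.sum_sub_distrib, Finset.mul_sum]
    refine Finset.sum_congr rfl fun y _ => ?_
    simp only [hdens]
    rw [abs_mul, abs_mul, abs_of_pos (hμ y), hXabs, abs_two]
    ring
  have hpin := transport_bdd (X := X) hμ hFpos (fun y => by simp only [hX]; split_ifs <;> simp)
  rw [hFsum, hμ1, div_one, one_mul, mul_one, ← htv] at hpin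
  nlinarith

end Glauber

/-! ### Mixing under a strong external field by contraction of oscillations -/

section Osc

set_option linter.unusedSectionVars false

variable {V : Type} [Fintype V] [DecidableEq V]

/-- Conditional probability of spin `+` at `v` given the other spins. -/
noncomputable def pPlus (μ : (V → Bool) → ℝ) (v : V) (σ : V → Bool) : ℝ :=
  μ (Function.update σ v true) / ∑ b, μ (Function.update σ v b)

lemma avg_eq_pPlus {μ : (V → Bool) → ℝ} (hμ : ∀ σ, 0 < μ σ) (v : V) (f : (V → Bool) → ℝ)
    (σ : V → Bool) : avg μ v f σ = f (Function.update σ v false) +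
      pPlus μ v σ * (f (Function.update σ v true) - f (Function.update σ v false)) := by
  have h1 := hμ (Function.update σ v true)
  have h2 := hμ (Function.update σ v false)
  unfold avg pPlus
  simp only [Fintype.sum_bool]
  field_simp
  ring

lemma pPlus_mem {μ : (V → Bool) → ℝ} (hμ : ∀ σ, 0 < μ σ) (v : V) (σ : V → Bool) :
    0 ≤ pPlus μ v σ ∧ pPlus μ v σ ≤ 1 := by
  have h1 := hμ (Function.update σ v true)
  have h2 := hμ (Function.update σ v false)
  unfold pPlus
  simp only [Fintype.sum_bool]
  refine ⟨by positivity, ?_⟩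
  rw [div_le_one (by positivity)]
  linarith

/-- Changing the spin at `v` changes `f` by at most `a v`. -/
def OscLe (f : (V → Bool) → ℝ) (a : V → ℝ) : Prop :=
  ∀ σ v b, |f (Function.update σ v b) - f σ| ≤ a v

lemma OscLe.nonneg {f : (V → Bool) → ℝ} {a : V → ℝ} (h : OscLe f a) (v : V) : 0 ≤ a v :=
  (abs_nonneg _).trans (h (fun _ => true) v true)

lemma OscLe.sub_le {f : (V → Bool) → ℝ} {a : V → ℝ} (h : OscLe f a) (σ τ : V → Bool) :
    |f σ - f τ| ≤ ∑ v, a v := by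
  have key : ∀ U : Finset V, ∀ σ τ : V → Bool, (∀ v, v ∉ U → σ v = τ v) →
      |f σ - f τ| ≤ ∑ v ∈ U, a v := by
    intro U
    induction U using Finset.induction_on with
    | empty =>
      intro σ τ hστ
      have : σ = τ := funext fun v => hστ v (by simp)
      simp [this]
    | insert v U hv ih =>
      intro σ τ hστ
      rw [Finset.sum_insert hv]
      have h1 := ih σ (Function.update τ v (σ v)) fun w hw => by
        by_cases hwv : w = v
        · subst hwv; simp
        · rw [Function.update_of_ne hwv]
          exact hστ w (by simp [hwv, hw])
      have h2 := h τ v (σ v)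
      calc |f σ - f τ| = |(f (Function.update τ v (σ v)) - f τ) +
            (f σ - f (Function.update τ v (σ v)))| := by congr 1; ring
        _ ≤ _ := (abs_add_le _ _).trans (add_le_add h2 h1)
  exact key univ σ τ (by simp)

variable (G : SimpleGraph V) [DecidableRel G.Adj] {μ : (V → Bool) → ℝ}

/-- Resampling `v` removes the oscillation at `v` and passes it on to the neighbours of `v`, scaled by
the influence. -/
lemma osc_avg (hμ : ∀ σ, 0 < μ σ) {θ : ℝ}
    (hθ : ∀ v u, u ≠ v → ∀ σ b, |pPlus μ v (Function.update σ u b) - pPlus μ v σ| ≤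
      if G.Adj v u then θ else 0) {f : (V → Bool) → ℝ} {a : V → ℝ} (ha : OscLe f a) (u v : V)
    (σ : V → Bool) (b : Bool) :
    |avg μ v f (Function.update σ u b) - avg μ v f σ| ≤
      (if v = u then 0 else a u) + (if G.Adj v u then θ else 0) * a v := by
  by_cases hvu : v = u
  · subst hvu
    simp [avg_update]
  · have huv : u ≠ v := fun h => hvu h.symm
    rw [if_neg hvu, avg_eq_pPlus hμ, avg_eq_pPlus hμ, Function.update_comm huv,
      Function.update_comm huv]
    have h0 := ha (Function.update σ v false) u b
    have h1 := ha (Function.update σ v true) u b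
    have h2 := hθ v u huv σ b
    have h3 := ha (Function.update σ v false) v true
    rw [Function.update_idem] at h3
    obtain ⟨p0, p1⟩ := pPlus_mem hμ v (Function.update σ u b)
    set p := pPlus μ v σ
    set p' := pPlus μ v (Function.update σ u b)
    set F1 := f (Function.update σ v true)
    set F0 := f (Function.update σ v false)
    set F1' := f (Function.update (Function.update σ v true) u b)
    set F0' := f (Function.update (Function.update σ v false) u b)
    have e : F0' + p' * (F1' - F0') - (F0 + p * (F1 - F0)) =
        (1 - p') * (F0' - F0) + p' * (F1' - F1) + (p' - p) * (F1 - F0) := by ring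
    rw [e]
    refine (abs_add_le _ _).trans (add_le_add ((abs_add_le _ _).trans ?_) ?_)
    · rw [abs_mul, abs_mul, abs_of_nonneg p0, abs_of_nonneg (by linarith : 0 ≤ 1 - p')]
      have := mul_le_mul_of_nonneg_left h0 (by linarith : 0 ≤ 1 - p')
      have := mul_le_mul_of_nonneg_left h1 p0
      linarith
    · rw [abs_mul]
      exact mul_le_mul h2 h3 (abs_nonneg _) ((abs_nonneg _).trans h2)

variable [Nonempty V]

/-- One step of the dynamics contracts the total oscillation when the total influence on each vertex
is at most `1 / 2`. -/
lemma osc_step (hμ : ∀ σ, 0 < μ σ) {θ : ℝ} {Δ : ℕ} (hdeg : ∀ v, G.degree v ≤ Δ) (hθ0 : 0 ≤ θ)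
    (hΔθ : Δ * θ ≤ 1 / 2)
    (hθ : ∀ v u, u ≠ v → ∀ σ b, |pPlus μ v (Function.update σ u b) - pPlus μ v σ| ≤
      if G.Adj v u then θ else 0) {f : (V → Bool) → ℝ} {a : V → ℝ} (ha : OscLe f a) :
    ∃ a', OscLe ((glauberMatrix μ).mulVec f) a' ∧
      ∑ u, a' u ≤ (1 - 1 / (2 * Fintype.card V)) * ∑ u, a u := by
  have hn0 : (0 : ℝ) < Fintype.card V := by exact_mod_cast Fintype.card_pos
  refine ⟨fun u => (Fintype.card V : ℝ)⁻¹ * ∑ v, ((if v = u then 0 else a u) +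
    (if G.Adj v u then θ else 0) * a v), fun σ u b => ?_, ?_⟩
  · rw [glauber_mulVec, glauber_mulVec, ← mul_sub, ← Finset.sum_sub_distrib, abs_mul,
      abs_of_pos (by positivity)]
    refine mul_le_mul_of_nonneg_left ?_ (by positivity)
    exact (Finset.abs_sum_le_sum_abs _ _).trans
      (Finset.sum_le_sum fun v _ => osc_avg G hμ hθ ha u v σ b)
  · rw [← Finset.mul_sum]
    simp_rw [Finset.sum_add_distrib]
    rw [Finset.sum_comm (f := fun u v => (if G.Adj v u then θ else 0) * a v)]
    have h1 : ∀ u, ∑ v, (if v = u then 0 else a u) = (Fintype.card V - 1) * a u := by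
      intro u
      have : ∀ v, (if v = u then 0 else a u) = a u - if v = u then a u else 0 := fun v => by
        split_ifs <;> simp
      simp_rw [this]
      rw [Finset.sum_sub_distrib, Finset.sum_const, Finset.card_univ, nsmul_eq_mul]
      simp
      ring
    have h2 : ∀ v, ∑ u, (if G.Adj v u then θ else 0) * a v ≤ 1 / 2 * a v := by
      intro v
      rw [← Finset.sum_mul, ← Finset.sum_filter, Finset.sum_const, nsmul_eq_mul,
        ← SimpleGraph.neighborFinset_eq_filter, SimpleGraph.card_neighborFinset_eq_degree]
      refine mul_le_mul_of_nonneg_right (le_trans ?_ hΔθ) (ha.nonneg v)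
      exact mul_le_mul_of_nonneg_right (by exact_mod_cast hdeg v) hθ0
    have h3 := Finset.sum_le_sum fun v (_ : v ∈ univ) => h2 v
    simp_rw [h1]
    rw [← Finset.mul_sum] at h3 ⊢
    calc _ ≤ (Fintype.card V : ℝ)⁻¹ * ((Fintype.card V - 1) * ∑ u, a u + 1 / 2 * ∑ u, a u) := by
          gcongr
      _ = _ := by field_simp; ring

lemma osc_pow (hμ : ∀ σ, 0 < μ σ) {θ : ℝ} {Δ : ℕ} (hdeg : ∀ v, G.degree v ≤ Δ) (hθ0 : 0 ≤ θ)
    (hΔθ : Δ * θ ≤ 1 / 2)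
    (hθ : ∀ v u, u ≠ v → ∀ σ b, |pPlus μ v (Function.update σ u b) - pPlus μ v σ| ≤
      if G.Adj v u then θ else 0) {f : (V → Bool) → ℝ} {a : V → ℝ} (ha : OscLe f a) (t : ℕ) :
    ∃ a', OscLe ((glauberMatrix μ ^ t).mulVec f) a' ∧
      ∑ u, a' u ≤ Real.exp (-(t / (2 * Fintype.card V))) * ∑ u, a u := by
  have hn0 : (0 : ℝ) < Fintype.card V := by exact_mod_cast Fintype.card_pos
  induction t with
  | zero => exact ⟨a, by simpa using ha, by simp⟩
  | succ t ih =>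
    obtain ⟨a', h1, h2⟩ := ih
    obtain ⟨a'', h3, h4⟩ := osc_step G hμ hdeg hθ0 hΔθ hθ h1
    refine ⟨a'', by rwa [pow_mulVec_succ], h4.trans ?_⟩
    have h5 := Real.add_one_le_exp (-(1 / (2 * Fintype.card V : ℝ)))
    have h6 : Real.exp (-(((t + 1 : ℕ) : ℝ) / (2 * Fintype.card V))) =
        Real.exp (-(1 / (2 * Fintype.card V : ℝ))) * Real.exp (-(t / (2 * Fintype.card V))) := by
      rw [← Real.exp_add]; congr 1; push_cast; ring
    have h7 : 0 ≤ ∑ u, a' u := Finset.sum_nonneg fun u _ => h1.nonneg u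
    rw [h6, mul_assoc]
    exact mul_le_mul (by linarith) h2 h7 (Real.exp_pos _).le

/-- Total variation distance is tested by the sign function `X`, whose oscillations are at most `2` at
each site; after `t` steps they sum to at most `2 n exp (-t / (2 n))`. -/
lemma tv_le_of_osc (hμ : ∀ σ, 0 < μ σ) (hμ1 : ∑ σ, μ σ = 1) {θ : ℝ} {Δ : ℕ}
    (hdeg : ∀ v, G.degree v ≤ Δ) (hθ0 : 0 ≤ θ) (hΔθ : Δ * θ ≤ 1 / 2)
    (hθ : ∀ v u, u ≠ v → ∀ σ b, |pPlus μ v (Function.update σ u b) - pPlus μ v σ| ≤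
      if G.Adj v u then θ else 0) (x : V → Bool) (t : ℕ) :
    tvDist (fun y => (glauberMatrix μ ^ t) x y) μ ≤
      Real.exp (-(t / (2 * Fintype.card V))) * Fintype.card V := by
  set X : (V → Bool) → ℝ := fun y => if 0 ≤ (glauberMatrix μ ^ t) x y - μ y then 1 else -1 with hX
  have hXosc : OscLe X fun _ => 2 := fun σ v b => by
    have : ∀ y, |X y| ≤ 1 := fun y => by simp only [hX]; split_ifs <;> simp
    have h1 := abs_le.1 (this (Function.update σ v b))
    have h2 := abs_le.1 (this σ)
    rw [abs_le]
    constructor <;> linarith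
  obtain ⟨a, ha, hsum⟩ := osc_pow G hμ hdeg hθ0 hΔθ hθ hXosc t
  set F := (glauberMatrix μ ^ t).mulVec X with hF
  have h1 : 2 * tvDist (fun y => (glauberMatrix μ ^ t) x y) μ = F x - ∑ y, μ y * X y := by
    unfold tvDist
    rw [hF, Matrix.mulVec, dotProduct, ← Finset.sum_sub_distrib, ← mul_assoc, mul_one_div_cancel
      two_ne_zero, one_mul]
    refine Finset.sum_congr rfl fun y _ => ?_
    simp only [hX]
    split_ifs with h0
    · rw [abs_of_nonneg h0]; ring
    · rw [abs_of_neg (not_le.1 h0)]; ring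
  have h2 : F x - ∑ y, μ y * X y = ∑ y, μ y * (F x - F y) := by
    rw [← glauber_pow_sum hμ X t]
    simp_rw [mul_sub, Finset.sum_sub_distrib]
    rw [← Finset.sum_mul, hμ1, one_mul]
  have h3 : ∑ y, μ y * (F x - F y) ≤ ∑ y, μ y * ∑ v, a v := Finset.sum_le_sum fun y _ =>
    mul_le_mul_of_nonneg_left ((le_abs_self _).trans (ha.sub_le x y)) (hμ y).le
  rw [← Finset.sum_mul, hμ1, one_mul] at h3
  simp only [Finset.sum_const, Finset.card_univ, nsmul_eq_mul] at hsum
  linarith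

end Osc

section Field

set_option linter.unusedSectionVars false

variable {V : Type} [Fintype V] [DecidableEq V] (G : SimpleGraph V) [DecidableRel G.Adj]

/-- Odds of spin `+` at `v` given the other spins. -/
noncomputable def siteOdds (J : ℝ) (h : V → ℝ) (v : V) (σ : V → Bool) : ℝ :=
  Real.exp (2 * J * ∑ w ∈ (univ.erase v).filter (G.Adj v), sp (σ w) + 2 * h v)

lemma isW_update_true (J : ℝ) (h : V → ℝ) (v : V) (σ : V → Bool) :
    isW G univ J h (Function.update σ v true) =
      siteOdds G J h v σ * isW G univ J h (Function.update σ v false) := by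
  have hs : ∀ b, ∑ w ∈ (univ.erase v).filter (G.Adj v), sp (Function.update σ v b w) =
      ∑ w ∈ (univ.erase v).filter (G.Adj v), sp (σ w) := fun b =>
    Finset.sum_congr rfl fun w hw => by
      rw [Function.update_of_ne (by simp at hw; exact hw.1)]
  unfold isW siteOdds
  rw [← Real.exp_add, inter_split G (mem_univ v), inter_split G (mem_univ v), hs, hs,
    inter_update G (Finset.notMem_erase v univ), inter_update G (Finset.notMem_erase v univ),
    lin_update, lin_update]
  congr 1
  simp
  ring

lemma siteOdds_bounds {Δ : ℕ} {J : ℝ} (hJ : Real.exp (2 * |J|) ≤ 3) (hdeg : ∀ v, G.degree v ≤ Δ)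
    (h : V → ℝ) (v : V) (σ : V → Bool) :
    siteOdds G J h v σ ≤ 3 ^ Δ * Real.exp (2 * h v) ∧
      (siteOdds G J h v σ)⁻¹ ≤ 3 ^ Δ * (Real.exp (2 * h v))⁻¹ := by
  set S := ∑ w ∈ (univ.erase v).filter (G.Adj v), sp (σ w) with hS
  have hSabs : |S| ≤ Δ := by
    refine (Finset.abs_sum_le_sum_abs _ _).trans ?_
    simp only [abs_sp, Finset.sum_const, nsmul_eq_mul, mul_one]
    have h1 := Finset.card_le_card (Finset.filter_subset_filter (G.Adj v) (Finset.erase_subset v univ))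
    rw [← SimpleGraph.neighborFinset_eq_filter, SimpleGraph.card_neighborFinset_eq_degree] at h1
    exact_mod_cast h1.trans (hdeg v)
  have h2 : |2 * J * S| ≤ Δ * (2 * |J|) := by
    rw [abs_mul, abs_mul, abs_two, mul_comm]
    gcongr
  have h3 : Real.exp (Δ * (2 * |J|)) ≤ 3 ^ Δ := by
    rw [Real.exp_nat_mul]
    gcongr
  have h4 := abs_le.1 h2
  unfold siteOdds
  rw [← Real.exp_neg, neg_add, Real.exp_add, Real.exp_add, ← Real.exp_neg]
  constructor
  · gcongr
    exact (Real.exp_le_exp.2 h4.2).trans h3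
  · gcongr
    exact (Real.exp_le_exp.2 (by linarith)).trans h3

/-- Influence bound under a strong field: all conditional probabilities of spin `+` at `v` lie within
`1 / (2 Δ)` of `0`, or all lie within `1 / (2 Δ)` of `1`. -/
lemma pPlus_influence {Δ : ℕ} (hΔ : 3 ≤ Δ) {J : ℝ} (hJ : Real.exp (2 * |J|) ≤ 3)
    (hdeg : ∀ v, G.degree v ≤ Δ) {h : V → ℝ}
    (hh : ∀ v, Real.log (2 * Δ * 3 ^ Δ) ≤ |2 * h v|) {c : ℝ} (hc : 0 < c) (v u : V) (huv : u ≠ v)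
    (σ : V → Bool) (b : Bool) :
    |pPlus (fun σ => c * isW G univ J h σ) v (Function.update σ u b) -
      pPlus (fun σ => c * isW G univ J h σ) v σ| ≤ if G.Adj v u then 1 / (2 * (Δ : ℝ)) else 0 := by
  have hΔ0 : (0 : ℝ) < Δ := by exact_mod_cast (by omega : 0 < Δ)
  have hp : ∀ σ, pPlus (fun σ => c * isW G univ J h σ) v σ =
      siteOdds G J h v σ / (siteOdds G J h v σ + 1) := by
    intro σ
    have h1 := isW_pos G univ J h (Function.update σ v false)
    have h2 : 0 < siteOdds G J h v σ := Real.exp_pos _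
    unfold pPlus
    simp only [Fintype.sum_bool]
    rw [isW_update_true]
    field_simp
  rw [hp, hp]
  split_ifs with hadj
  · have hpos : ∀ σ, 0 < siteOdds G J h v σ := fun σ => Real.exp_pos _
    have hb1 := siteOdds_bounds G hJ hdeg h v (Function.update σ u b)
    have hb2 := siteOdds_bounds G hJ hdeg h v σ
    have hr1 := hpos (Function.update σ u b)
    have hr2 := hpos σ
    set r1 := siteOdds G J h v (Function.update σ u b)
    set r2 := siteOdds G J h v σ
    have ediv : ∀ r : ℝ, 0 < r → r / (r + 1) ≤ r ∧ 0 ≤ r / (r + 1) ∧ r / (r + 1) ≤ 1 ∧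
        1 - r / (r + 1) ≤ r⁻¹ := by
      intro r hr
      refine ⟨?_, by positivity, ?_, ?_⟩
      · rw [div_le_iff₀ (by positivity)]; nlinarith
      · rw [div_le_one (by positivity)]; linarith
      · have : 1 - r / (r + 1) = (r + 1)⁻¹ := by field_simp; ring
        rw [this]
        exact inv_anti₀ hr (by linarith)
    obtain ⟨p1, p2, p3, p4⟩ := ediv r1 hr1
    obtain ⟨q1, q2, q3, q4⟩ := ediv r2 hr2
    have hL : Real.exp (Real.log (2 * Δ * 3 ^ Δ)) = 2 * Δ * 3 ^ Δ := Real.exp_log (by positivity)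
    have e3 : (3 : ℝ) ^ Δ * (2 * (Δ : ℝ) * 3 ^ Δ)⁻¹ = 1 / (2 * Δ) := by field_simp
    have h3 := hh v
    rw [abs_le]
    rcases le_total 0 (2 * h v) with h0 | h0
    · rw [abs_of_nonneg h0, ← Real.exp_le_exp, hL] at h3
      have h5 : (3 : ℝ) ^ Δ * (Real.exp (2 * h v))⁻¹ ≤ 1 / (2 * Δ) := by
        rw [← e3]; gcongr
      constructor <;> linarith [hb1.2, hb2.2]
    · rw [abs_of_nonpos h0, ← Real.exp_le_exp, hL, Real.exp_neg] at h3
      have h4 : Real.exp (2 * h v) ≤ (2 * (Δ : ℝ) * 3 ^ Δ)⁻¹ := by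
        rw [le_inv_comm₀ (Real.exp_pos _) (by positivity)]; exact h3
      have h5 : (3 : ℝ) ^ Δ * Real.exp (2 * h v) ≤ 1 / (2 * Δ) := by
        rw [← e3]; gcongr
      constructor <;> linarith [hb1.1, hb2.1]
  · have : siteOdds G J h v (Function.update σ u b) = siteOdds G J h v σ := by
      unfold siteOdds
      congr 3
      refine Finset.sum_congr rfl fun w hw => ?_
      have hw' : w ≠ u := by
        rintro rfl
        simp at hw
        exact hadj hw.2
      rw [Function.update_of_ne hw']
    rw [this]
    simp

end Field

/-! ### The Ising Gibbs distribution -/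

section Final

set_option linter.unusedSectionVars false

variable {V : Type} [Fintype V] [DecidableEq V] (G : SimpleGraph V) [DecidableRel G.Adj]

/-- Monochromatic edges are counted with both orientations, so halving the count in `ℕ` is exact. -/
lemma even_mono (σ : V → Bool) :
    Even (univ.filter fun p : V × V => G.Adj p.1 p.2 ∧ σ p.1 = σ p.2).card := by
  rw [← ZMod.natCast_eq_zero_iff_even, Finset.card_eq_sum_ones, Nat.cast_sum]
  refine Finset.sum_involution (fun p _ => p.swap) ?_ ?_ ?_ ?_
  · intro p _; decide
  · rintro ⟨u, v⟩ hp _ heq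
    simp only [mem_filter, mem_univ, true_and] at hp
    simp only [Prod.swap_prod_mk, Prod.mk.injEq] at heq
    exact G.ne_of_adj hp.1 heq.2
  · rintro ⟨u, v⟩ hp
    simp only [mem_filter, mem_univ, true_and, Prod.swap_prod_mk] at hp ⊢
    exact ⟨hp.1.symm, hp.2.symm⟩
  · intro p _; simp

lemma monoEdges_eq (σ : V → Bool) :
    (monoEdges G σ : ℝ) = (∑ u, ∑ v, if G.Adj u v then (1 : ℝ) else 0) / 4 + inter G univ σ / 4 := by
  have h1 : ((univ.filter fun p : V × V => G.Adj p.1 p.2 ∧ σ p.1 = σ p.2).card : ℝ) =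
      (∑ u, ∑ v, if G.Adj u v then (1 : ℝ) else 0) / 2 + inter G univ σ / 2 := by
    rw [Finset.natCast_card_filter, Fintype.sum_prod_type, inter, Finset.sum_div, Finset.sum_div,
      ← Finset.sum_add_distrib]
    refine Finset.sum_congr rfl fun u _ => ?_
    rw [Finset.sum_div, Finset.sum_div, ← Finset.sum_add_distrib]
    refine Finset.sum_congr rfl fun v _ => ?_
    by_cases hadj : G.Adj u v
    · cases σ u <;> cases σ v <;> simp [hadj] <;> norm_num
    · simp [hadj]
  unfold monoEdges
  rw [Nat.cast_div (even_mono G σ).two_dvd (by norm_num), h1]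
  push_cast
  ring

lemma numPlus_eq (σ : V → Bool) :
    (numPlus σ : ℝ) = (Fintype.card V : ℝ) / 2 + (∑ v, sp (σ v)) / 2 := by
  unfold numPlus
  rw [Finset.natCast_card_filter, ← Finset.card_univ, Finset.card_eq_sum_ones, Nat.cast_sum,
    Finset.sum_div, Finset.sum_div, ← Finset.sum_add_distrib]
  refine Finset.sum_congr rfl fun v _ => ?_
  cases σ v <;> norm_num

/-- In `±1` spins the coupling is `log β / 2` and the field is `log λ / 2` at every vertex. -/
lemma isingWeight_eq {β lam : ℝ} (hβ : 0 < β) (hl : 0 < lam) :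
    ∃ a : ℝ, 0 < a ∧ ∀ σ, isingWeight G β lam σ =
      a * isW G univ (Real.log β / 2) (fun _ => Real.log lam / 2) σ := by
  refine ⟨Real.exp (Real.log β * ((∑ u, ∑ v, if G.Adj u v then (1 : ℝ) else 0) / 4) +
    Real.log lam * ((Fintype.card V : ℝ) / 2)), Real.exp_pos _, fun σ => ?_⟩
  unfold isingWeight isW lin
  rw [← Real.rpow_natCast, ← Real.rpow_natCast, Real.rpow_def_of_pos hβ, Real.rpow_def_of_pos hl,
    ← Real.exp_add, ← Real.exp_add, monoEdges_eq, numPlus_eq, ← Finset.mul_sum]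
  congr 1
  ring

lemma isingGibbs_eq {β lam : ℝ} (hβ : 0 < β) (hl : 0 < lam) :
    isingGibbs G β lam = fun σ =>
      (∑ σ', isW G univ (Real.log β / 2) (fun _ => Real.log lam / 2) σ')⁻¹ *
        isW G univ (Real.log β / 2) (fun _ => Real.log lam / 2) σ := by
  obtain ⟨a, ha, haw⟩ := isingWeight_eq G hβ hl
  funext σ
  unfold isingGibbs
  simp_rw [haw]
  rw [← Finset.mul_sum, mul_div_mul_left _ _ ha.ne', div_eq_inv_mul]

lemma abs_inter_le {Δ : ℕ} (hdeg : ∀ v, G.degree v ≤ Δ) (σ : V → Bool) :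
    |inter G univ σ| ≤ Fintype.card V * Δ := by
  unfold inter
  calc |∑ u, ∑ v, if G.Adj u v then sp (σ u) * sp (σ v) else 0|
      ≤ ∑ u, ∑ v, |if G.Adj u v then sp (σ u) * sp (σ v) else 0| :=
        (Finset.abs_sum_le_sum_abs _ _).trans
          (Finset.sum_le_sum fun u _ => Finset.abs_sum_le_sum_abs _ _)
    _ = ∑ u, (G.degree u : ℝ) := by
        refine Finset.sum_congr rfl fun u _ => ?_
        rw [← G.card_neighborFinset_eq_degree, G.neighborFinset_eq_filter,
          Finset.natCast_card_filter]
        refine Finset.sum_congr rfl fun v _ => ?_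
        split_ifs <;> simp [abs_mul, abs_sp]
    _ ≤ ∑ _u : V, (Δ : ℝ) := Finset.sum_le_sum fun u _ => by exact_mod_cast hdeg u
    _ = Fintype.card V * Δ := by simp

lemma abs_exponent_le {Δ : ℕ} (hdeg : ∀ v, G.degree v ≤ Δ) {J x : ℝ} (hJ : |J| ≤ 1)
    (σ : V → Bool) :
    |J / 2 * inter G univ σ + lin (fun _ => x) σ| ≤ Fintype.card V * (Δ / 2 + |x|) := by
  have h1 := abs_inter_le G hdeg σ
  have h2 : |lin (fun _ => x) σ| ≤ Fintype.card V * |x| := by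
    unfold lin
    refine (Finset.abs_sum_le_sum_abs _ _).trans (le_of_eq ?_)
    simp [abs_mul, abs_sp]
  have h3 : |J / 2 * inter G univ σ| ≤ 1 / 2 * (Fintype.card V * Δ) := by
    rw [abs_mul, abs_div, abs_of_pos (by norm_num : (0 : ℝ) < 2)]
    gcongr
  calc _ ≤ _ := abs_add_le _ _
    _ ≤ 1 / 2 * (Fintype.card V * Δ) + Fintype.card V * |x| := add_le_add h3 h2
    _ = _ := by ring

/-- The logarithm of the inverse probability of any configuration is at most linear in `n`. -/
lemma log_inv_le {Δ : ℕ} (hdeg : ∀ v, G.degree v ≤ Δ) {J x : ℝ} (hJ : |J| ≤ 1) (σ : V → Bool) :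
    Real.log (1 / ((∑ σ', isW G univ J (fun _ => x) σ')⁻¹ * isW G univ J (fun _ => x) σ)) ≤
      Fintype.card V * (1 + Δ + |2 * x|) := by
  set n : ℝ := (Fintype.card V : ℝ)
  have hn : 0 ≤ n := Nat.cast_nonneg _
  set M := n * (Δ / 2 + |x|) with hM
  have hZ : 0 < ∑ σ', isW G univ J (fun _ => x) σ' :=
    Finset.sum_pos (fun σ' _ => isW_pos G univ J _ σ') univ_nonempty
  have hle : ∑ σ', isW G univ J (fun _ => x) σ' ≤ Real.exp (n * 1 + M) := by
    calc _ ≤ ∑ _σ' : V → Bool, Real.exp M := Finset.sum_le_sum fun σ' _ =>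
          Real.exp_le_exp.2 (abs_le.1 (abs_exponent_le G hdeg hJ σ')).2
      _ = (2 : ℝ) ^ Fintype.card V * Real.exp M := by simp
      _ ≤ Real.exp 1 ^ Fintype.card V * Real.exp M := by
          have := Real.add_one_le_exp (1 : ℝ)
          gcongr
          linarith
      _ = _ := by rw [← Real.exp_nat_mul, ← Real.exp_add]
  have hge : Real.exp (-M) ≤ isW G univ J (fun _ => x) σ :=
    Real.exp_le_exp.2 (abs_le.1 (abs_exponent_le G hdeg hJ σ)).1
  have hw := isW_pos G univ J (fun _ => x) σ
  rw [one_div, mul_inv, inv_inv, ← div_eq_mul_inv, Real.log_div hZ.ne' hw.ne']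
  have h1 := Real.log_le_log hZ hle
  have h2 := Real.log_le_log (Real.exp_pos _) hge
  rw [Real.log_exp] at h1 h2
  have h3 : |2 * x| = 2 * |x| := by rw [abs_mul]; norm_num
  rw [h3]
  calc _ ≤ n * 1 + M - -M := by linarith
    _ = _ := by rw [hM]; ring

lemma mixingTime_le (μ : (V → Bool) → ℝ) (P : Matrix (V → Bool) (V → Bool) ℝ) (ε : ℝ) (t : ℕ)
    (h : ∀ x, tvDist (fun y => (P ^ t) x y) μ ≤ ε) : mixingTime μ P ε ≤ t :=
  Finset.sup_le fun x _ => Nat.sInf_le (h x)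

lemma exp_neg_div_le {D a t : ℝ} (hD : 0 < D) (ha : 0 < a) (ht : D * Real.log a ≤ t) :
    Real.exp (-(t / D)) ≤ a⁻¹ := by
  rw [← Real.exp_log (inv_pos.2 ha), Real.log_inv]
  apply Real.exp_le_exp.2
  rw [neg_le_neg_iff, le_div_iff₀ hD]
  linarith

lemma one_le_mul_log {n : ℝ} (hn : 2 ≤ n) : 1 ≤ n * Real.log n := by
  have h1 : Real.log 2 ≤ Real.log n := Real.log_le_log (by norm_num) hn
  have h2 := Real.log_two_gt_d9
  nlinarith

/-- Rounding a time `D n log (a n)` up to an integer costs only a constant factor. -/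
lemma ceil_le_mul_log {n a D : ℝ} (hn : 2 ≤ n) (ha : 1 ≤ a) (hD : 0 ≤ D) :
    (⌈D * n * Real.log (a * n)⌉₊ : ℝ) ≤
      (D * (Real.log a / Real.log 2 + 1) + 1) * n * Real.log n := by
  have h1 : Real.log 2 ≤ Real.log n := Real.log_le_log (by norm_num) hn
  have h2 : 0 < Real.log 2 := Real.log_pos (by norm_num)
  have h3 : 0 ≤ Real.log a := Real.log_nonneg ha
  have h4 : Real.log (a * n) ≤ (Real.log a / Real.log 2 + 1) * Real.log n := by
    rw [Real.log_mul (by positivity) (by positivity), add_mul, one_mul]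
    have : Real.log a / Real.log 2 * Real.log 2 ≤ Real.log a / Real.log 2 * Real.log n := by
      gcongr
    rw [div_mul_cancel₀ _ h2.ne'] at this
    linarith
  have h5 : 0 ≤ Real.log (a * n) := Real.log_nonneg (by nlinarith)
  have h6 := (Nat.ceil_lt_add_one (a := D * n * Real.log (a * n)) (by positivity)).le
  have h7 : D * n * Real.log (a * n) ≤ D * n * ((Real.log a / Real.log 2 + 1) * Real.log n) := by
    gcongr
  have h8 := one_le_mul_log hn
  linarith

/-- The bound `(Δ - δ) / (Δ - 2 + δ)` on `β` and on `1 / β` bounds `exp |log β|`. -/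
lemma exp_abs_log_le {Δ : ℕ} (hΔ : 3 ≤ Δ) {δ β : ℝ} (hδ0 : 0 < δ) (hδ1 : δ < 1)
    (h1 : ((Δ : ℝ) - 2 + δ) / ((Δ : ℝ) - δ) ≤ β) (h2 : β ≤ ((Δ : ℝ) - δ) / ((Δ : ℝ) - 2 + δ)) :
    0 < β ∧ Real.exp (2 * |Real.log β / 2|) ≤ ((Δ : ℝ) - δ) / ((Δ : ℝ) - 2 + δ) ∧
      ((Δ : ℝ) - δ) / ((Δ : ℝ) - 2 + δ) ≤ 3 := by
  have hΔ' : (3 : ℝ) ≤ Δ := by exact_mod_cast hΔ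
  have p1 : 0 < (Δ : ℝ) - 2 + δ := by linarith
  have p2 : 0 < (Δ : ℝ) - δ := by linarith
  have hβ : 0 < β := lt_of_lt_of_le (by positivity) h1
  refine ⟨hβ, ?_, ?_⟩
  · have : 2 * |Real.log β / 2| = |Real.log β| := by
      rw [abs_div, abs_of_pos (by norm_num : (0 : ℝ) < 2)]; ring
    rw [this]
    rcases abs_choice (Real.log β) with h | h <;> rw [h]
    · rwa [Real.exp_log hβ]
    · rw [Real.exp_neg, Real.exp_log hβ, inv_le_comm₀ hβ (by positivity), inv_div]
      exact h1
  · rw [div_le_iff₀ p1]; linarith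

end Final

end IsingMix

open IsingMix

/-- **Optimal mixing for the Ising model throughout the tree uniqueness region.**
For all `Δ ≥ 3` and `δ ∈ (0,1)` there is a constant `C = C(Δ,δ)` such that on every
`n`-vertex graph of maximum degree at most `Δ`, for every
`β ∈ [(Δ−2+δ)/(Δ−δ), (Δ−δ)/(Δ−2+δ)]` and every external field `λ > 0`, the Glauber
dynamics for the Ising model mixes (to total variation distance `1/4`) within
`C·n·log n` steps. -/
theorem ising_optimal_mixing
    (Δ : ℕ) (hΔ : 3 ≤ Δ) (δ : ℝ) (hδ0 : 0 < δ) (hδ1 : δ < 1) :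
    ∃ C : ℝ, ∀ (V : Type) [Fintype V] [DecidableEq V]
      (G : SimpleGraph V) [DecidableRel G.Adj],
      2 ≤ Fintype.card V → (∀ v : V, G.degree v ≤ Δ) →
      ∀ β lam : ℝ,
        ((Δ : ℝ) - 2 + δ) / ((Δ : ℝ) - δ) ≤ β →
        β ≤ ((Δ : ℝ) - δ) / ((Δ : ℝ) - 2 + δ) →
        0 < lam →
      (mixingTime (isingGibbs G β lam)
          (glauberMatrix (isingGibbs G β lam)) (1 / 4) : ℝ) ≤
        C * (Fintype.card V : ℝ) * Real.log (Fintype.card V) := by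
  have hΔ0 : (0 : ℝ) < Δ := by exact_mod_cast (by omega : 0 < Δ)
  -- For `|log λ| ≥ L` influences are below `1 / (2 Δ)`; for smaller fields every probability is at
  -- least `exp (-K n)`.
  set L := Real.log (2 * Δ * 3 ^ Δ) with hL
  have hL0 : 0 ≤ L := by
    apply Real.log_nonneg
    have h1 : (1 : ℝ) ≤ 3 ^ Δ := one_le_pow₀ (by norm_num)
    have h2 : (3 : ℝ) ≤ Δ := by exact_mod_cast hΔ
    nlinarith
  set K : ℝ := 1 + Δ + L with hK
  set C₀ : ℝ := Real.exp (32 * Δ * (1 + Δ / δ)) with hC₀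
  have hK1 : 1 ≤ K := by linarith
  have hC₀1 : 1 ≤ C₀ := Real.one_le_exp (by positivity)
  set C₁ := C₀ * (Real.log (32 * K) / Real.log 2 + 1) + 1 with hC₁
  set C₂ : ℝ := 2 * (Real.log 4 / Real.log 2 + 1) + 1 with hC₂
  refine ⟨max C₁ C₂, fun V _ _ G _ hn hdeg β lam hβ1 hβ2 hlam => ?_⟩
  obtain ⟨hβ, hJ, hB⟩ := exp_abs_log_le hΔ hδ0 hδ1 hβ1 hβ2
  have hn' : (2 : ℝ) ≤ Fintype.card V := by exact_mod_cast hn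
  have hne : Nonempty V := Fintype.card_pos_iff.1 (by omega)
  have hlog : 0 ≤ Real.log (Fintype.card V) := Real.log_nonneg (by linarith)
  have hfin : ∀ t : ℕ, ∀ C, C ≤ max C₁ C₂ →
      (t : ℝ) ≤ C * (Fintype.card V : ℝ) * Real.log (Fintype.card V) →
      (∀ x, tvDist (fun y => (glauberMatrix (isingGibbs G β lam) ^ t) x y)
        (isingGibbs G β lam) ≤ 1 / 4) →
      (mixingTime (isingGibbs G β lam) (glauberMatrix (isingGibbs G β lam)) (1 / 4) : ℝ) ≤
        max C₁ C₂ * (Fintype.card V : ℝ) * Real.log (Fintype.card V) := by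
    intro t C hC ht h
    calc _ ≤ (t : ℝ) := by exact_mod_cast mixingTime_le _ _ _ t h
      _ ≤ _ := ht
      _ ≤ _ := by gcongr
  have hJ3 := hJ.trans hB
  set J := Real.log β / 2 with hJdef
  have hJ1 : |J| ≤ 1 := by
    have := Real.add_one_le_exp (2 * |J|)
    linarith
  have hμeq := isingGibbs_eq G hβ hlam
  have hZ : 0 < ∑ σ', isW G univ J (fun _ => Real.log lam / 2) σ' :=
    Finset.sum_pos (fun σ' _ => isW_pos G univ J _ σ') univ_nonempty
  set c := (∑ σ', isW G univ J (fun _ => Real.log lam / 2) σ')⁻¹ with hc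
  have hc0 : 0 < c := inv_pos.2 hZ
  have hμ : ∀ σ, 0 < isingGibbs G β lam σ := fun σ => by
    rw [hμeq]; exact mul_pos hc0 (isW_pos G univ J _ σ)
  have hμ1 : ∑ σ, isingGibbs G β lam σ = 1 := by
    rw [hμeq]
    simp only
    rw [← Finset.mul_sum, hc, inv_mul_cancel₀ hZ.ne']
  have h2x : 2 * (Real.log lam / 2) = Real.log lam := by ring
  rcases le_total L |Real.log lam| with hbig | hsmall
  · refine hfin ⌈2 * (Fintype.card V : ℝ) * Real.log (4 * Fintype.card V)⌉₊ C₂ (le_max_right _ _)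
      (ceil_le_mul_log hn' (by norm_num) (by norm_num)) fun x => ?_
    refine (tv_le_of_osc G hμ hμ1 hdeg (θ := 1 / (2 * (Δ : ℝ))) (by positivity)
      (le_of_eq (by field_simp)) ?_ x _).trans ?_
    · intro v u huv σ b
      rw [hμeq]
      exact pPlus_influence G hΔ hJ3 hdeg (fun _ => by rw [h2x]; exact hbig) hc0 v u huv σ b
    · have h1 := exp_neg_div_le (D := 2 * (Fintype.card V : ℝ)) (a := 4 * (Fintype.card V : ℝ))
        (by positivity) (by positivity) (Nat.le_ceil _)
      calc _ ≤ (4 * (Fintype.card V : ℝ))⁻¹ * Fintype.card V := by gcongr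
        _ = 1 / 4 := by field_simp
  · refine hfin ⌈C₀ * (Fintype.card V : ℝ) * Real.log (32 * K * Fintype.card V)⌉₊ C₁
      (le_max_left _ _) (ceil_le_mul_log hn' (by linarith) (by linarith)) fun x => ?_
    refine tv_le_of_ent hμ hμ1 hC₀1 ?_ x _ ?_
    · intro f hf
      rw [hμeq, ent_smul c hc0, siteEnt_smul c hc0, mul_left_comm]
      refine mul_le_mul_of_nonneg_left ?_ hc0.le
      refine (approx_tensor G hΔ hδ0 hJ hdeg _ f hf).trans ?_
      have hs : 0 ≤ siteEnt (isW G univ J fun _ => Real.log lam / 2) f := by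
        unfold siteEnt
        exact Finset.sum_nonneg fun v _ => mul_nonneg (by norm_num) <| Finset.sum_nonneg fun σ _ =>
          ent_nonneg (fun _ => isW_pos G univ J _ _) fun _ => hf _
      refine mul_le_mul_of_nonneg_right (Real.exp_le_exp.2 ?_) hs
      exact mul_le_of_le_one_right (by positivity) hJ1
    · have h1 := exp_neg_div_le (D := C₀ * (Fintype.card V : ℝ))
        (a := 32 * K * (Fintype.card V : ℝ)) (by positivity) (by positivity) (Nat.le_ceil _)
      have h2 := log_inv_le G hdeg (x := Real.log lam / 2) hJ1 x
      rw [h2x] at h2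
      have h3 : Real.log (1 / isingGibbs G β lam x) ≤ Fintype.card V * K := by
        rw [hμeq]
        refine h2.trans ?_
        rw [hK]
        gcongr
      calc _ ≤ Real.exp (-(↑⌈C₀ * (Fintype.card V : ℝ) *
              Real.log (32 * K * Fintype.card V)⌉₊ / (C₀ * (Fintype.card V : ℝ)))) *
              (Fintype.card V * K) := by gcongr
        _ ≤ (32 * K * (Fintype.card V : ℝ))⁻¹ * (Fintype.card V * K) := by gcongr
        _ = 1 / 32 := by field_simp
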